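/- arXiv:2107.02158 — 2 statements merged into one kernel-verified Lean document; each statement's English description precedes it below -/
import Mathlib

section
/- For every integer k ≥ 1 there exist constants c > 0 and C > 0 (depending only on k) such that for all sufficiently large N and all real 2 ≤ w, z ≤ Q, where Q := exp((log N)^{1/10}), one has ‖Λ_{Cramér,w} − Λ_{Cramér,z}‖_{U^k([N])} ≤ C·((log N)^{−c} + w^{−c} + z^{−c}). -/
open scoped Classical

noncomputable section

/-- The product of conjugated shifts appearing in the Gowers norm over an additive group. -/
def gowersProd {G : Type*} [AddCommGroup G] (k : ℕ) (f : G → ℂ) (n : G) (h : Fin k → G) : ℂ :=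
  ∏ ω : Fin k → Bool,
    (⇑(starRingEnd ℂ))^[(Finset.univ.filter fun i => ω i = true).card]
      (f (n + ∑ i, if ω i then h i else 0))

/-- The unnormalized Gowers norm `‖f‖_{Ũ^k(G)}`. -/
def gowersTildeU {G : Type*} [AddCommGroup G] (k : ℕ) (f : G → ℂ) : ℝ :=
  (∑' nh : G × (Fin k → G), gowersProd k f nh.1 nh.2).re ^ ((1 : ℝ) / 2 ^ k)

/-- The restriction `f·1_{[N]}` of `f : ℤ → ℂ` to `[N] = {n ∈ ℕ : 1 ≤ n ≤ N}`. -/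
def truncN (N : ℝ) (f : ℤ → ℂ) : ℤ → ℂ := fun n => if 1 ≤ n ∧ (n : ℝ) ≤ N then f n else 0

/-- The local (normalized) Gowers norm `‖f‖_{U^k([N])}`. -/
def gowersUN (k : ℕ) (N : ℝ) (f : ℤ → ℂ) : ℝ :=
  gowersTildeU k (truncN N f) / gowersTildeU k (truncN N fun _ => 1)

/-- The Cramér model `Λ_{Cramér,w}(n) = ∏_{p < w, p prime} (p/(p-1))·1_{p ∤ n}`. -/
def cramer (w : ℝ) (n : ℤ) : ℝ :=
  ∏ p ∈ (Finset.range (⌈w⌉₊ + 1)).filter fun p => Nat.Prime p ∧ (p : ℝ) < w,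
    if (p : ℤ) ∣ n then 0 else (p : ℝ) / ((p : ℝ) - 1)

/-- The quantity `Q = exp((log N)^{1/10})`. -/
def Qparam (N : ℝ) : ℝ := Real.exp (Real.log N ^ ((1 : ℝ) / 10))

end

namespace CG

abbrev V (k : ℕ) (R : Type) := R × (Fin k → R)

noncomputable def L {k : ℕ} {R : Type} [AddCommGroup R] (ω : Fin k → Bool) : V k R →+ R where
  toFun x := x.1 + ∑ i, if ω i then x.2 i else 0
  map_zero' := by simp
  map_add' x y := by
    have : (∑ i, if ω i then (x + y).2 i else 0)
        = (∑ i, if ω i then x.2 i else 0) + ∑ i, if ω i then y.2 i else 0 := by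
      rw [← Finset.sum_add_distrib]
      refine Finset.sum_congr rfl fun i _ => ?_
      split_ifs <;> simp
    rw [this, Prod.fst_add]; abel

lemma L_apply {k : ℕ} {R : Type} [AddCommGroup R] (ω : Fin k → Bool) (x : V k R) :
    L ω x = x.1 + ∑ i, if ω i then x.2 i else 0 := rfl

lemma L_surj {k : ℕ} {R : Type} [AddCommGroup R] (ω : Fin k → Bool) :
    Function.Surjective (L ω : V k R →+ R) := fun a => ⟨(a, 0), by simp [L_apply]⟩

lemma L_false {k : ℕ} {R : Type} [AddCommGroup R] (x : V k R) :
    L (fun _ => false) x = x.1 := by simp [L_apply]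

lemma L_single {k : ℕ} {R : Type} [AddCommGroup R] (x : V k R) (j : Fin k) :
    L (fun i => decide (i = j)) x = x.1 + x.2 j := by simp [L_apply]

lemma L2_surj_aux {k : ℕ} {R : Type} [AddCommGroup R] (ω ω' : Fin k → Bool) (i : Fin k)
    (h : ω i = true) (h' : ω' i = false) (a b : R) :
    ∃ x : V k R, L ω x = a ∧ L ω' x = b := by
  refine ⟨(b, Pi.single i (a - b)), ?_, ?_⟩
  · rw [L_apply]
    rw [Finset.sum_eq_single i]
    · simp [h]
    · intro j _ hj; simp [hj]
    · simp
  · rw [L_apply]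
    rw [Finset.sum_eq_zero]
    · simp
    · intro j _
      by_cases hj : j = i
      · subst hj; simp [h']
      · simp [hj]

lemma L2_surj {k : ℕ} {R : Type} [AddCommGroup R] (ω ω' : Fin k → Bool) (h : ω ≠ ω') :
    Function.Surjective ((L ω).prod (L ω') : V k R →+ R × R) := by
  rintro ⟨a, b⟩
  obtain ⟨i, hi⟩ := Function.ne_iff.mp h
  rcases hω : ω i with _ | _
  · have h' : ω' i = true := by
      rcases hh : ω' i with _ | _
      · exact absurd (hω.trans hh.symm) hi
      · rfl
    obtain ⟨x, h1, h2⟩ := L2_surj_aux ω' ω i h' hω b a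
    exact ⟨x, by simp [h1, h2]⟩
  · have h' : ω' i = false := by
      rcases hh : ω' i with _ | _
      · rfl
      · exact absurd (hω.trans hh.symm) hi
    obtain ⟨x, h1, h2⟩ := L2_surj_aux ω ω' i hω h' a b
    exact ⟨x, by simp [h1, h2]⟩

lemma sum_surj {G H : Type} [AddCommGroup G] [AddCommGroup H] [Fintype G] [Fintype H]
    (φ : G →+ H) (hφ : Function.Surjective φ) (F : H → ℝ) :
    (∑ g, F (φ g)) / Fintype.card G = (∑ h, F h) / Fintype.card H := by
  have h1 : ∀ h, ∑ g, F (φ g + h) = ∑ g, F (φ g) := by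
    intro h
    obtain ⟨g0, rfl⟩ := hφ h
    rw [← Equiv.sum_comp (Equiv.addRight g0) (fun g => F (φ g))]
    simp
  have h2 : ∑ h, ∑ g, F (φ g + h) = Fintype.card H * ∑ g, F (φ g) := by
    simp [h1]
  have h3 : ∑ h, ∑ g, F (φ g + h) = Fintype.card G * ∑ h, F h := by
    rw [Finset.sum_comm]
    have : ∀ g, ∑ h, F (φ g + h) = ∑ h, F h := fun g =>
      Equiv.sum_comp (Equiv.addLeft (φ g)) F
    simp [this]
  have c1 : (Fintype.card G : ℝ) ≠ 0 := by exact_mod_cast Fintype.card_ne_zero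
  have c2 : (Fintype.card H : ℝ) ≠ 0 := by exact_mod_cast Fintype.card_ne_zero
  rw [div_eq_div_iff c1 c2]
  linarith

/-- the finite region -/
noncomputable def Om (k M : ℕ) : Finset (V k ℤ) :=
  ((Finset.Icc (1 : ℤ) M) ×ˢ (Fintype.piFinset fun _ : Fin k => Finset.Icc (-(M : ℤ)) M)).filter
    fun x => ∀ ω : Fin k → Bool, 1 ≤ L ω x ∧ L ω x ≤ M

lemma mem_Om {k M : ℕ} {x : V k ℤ} :
    x ∈ Om k M ↔ ∀ ω : Fin k → Bool, 1 ≤ L ω x ∧ L ω x ≤ M := by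
  unfold Om
  rw [Finset.mem_filter]
  refine ⟨fun h => h.2, fun h => ⟨?_, h⟩⟩
  have h0 := h (fun _ => false)
  rw [L_false] at h0
  rw [Finset.mem_product, Finset.mem_Icc, Fintype.mem_piFinset]
  refine ⟨h0, fun j => ?_⟩
  have h1 := h (fun i => decide (i = j))
  rw [L_single] at h1
  rw [Finset.mem_Icc]
  constructor <;> linarith [h1.1, h1.2, h0.1, h0.2]

lemma Om_bd {k M : ℕ} {x : V k ℤ} (h : x ∈ Om k M) (j : Fin k) :
    x.2 j ∈ Finset.Icc (-(M : ℤ)) M := by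
  unfold Om at h
  rw [Finset.mem_filter, Finset.mem_product, Fintype.mem_piFinset] at h
  exact h.1.2 j

lemma fiber_sum {k M : ℕ} (ω : Fin k → Bool) (G : ℤ → ℝ) (hG : ∀ a, 0 ≤ G a) :
    ∑ x ∈ Om k M, G (L ω x) ≤ (2 * M + 1) ^ k * ∑ a ∈ Finset.Icc (1 : ℤ) M, G a := by
  have hinj : Set.InjOn (fun x : V k ℤ => (L ω x, x.2)) (Om k M) := by
    rintro ⟨a, b⟩ _ ⟨c, d⟩ _ h
    simp only [Prod.mk.injEq, L_apply] at h
    obtain ⟨h1, rfl⟩ := h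
    simpa using h1
  calc ∑ x ∈ Om k M, G (L ω x)
      = ∑ z ∈ (Om k M).image (fun x : V k ℤ => (L ω x, x.2)), G z.1 := by
        rw [Finset.sum_image hinj]
    _ ≤ ∑ z ∈ (Finset.Icc (1 : ℤ) M) ×ˢ
          (Fintype.piFinset fun _ : Fin k => Finset.Icc (-(M : ℤ)) M), G z.1 := by
        refine Finset.sum_le_sum_of_subset_of_nonneg ?_ (fun _ _ _ => hG _)
        intro z hz
        obtain ⟨x, hx, rfl⟩ := Finset.mem_image.mp hz
        rw [Finset.mem_product, Finset.mem_Icc, Fintype.mem_piFinset]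
        exact ⟨mem_Om.mp hx ω, fun j => Om_bd hx j⟩
    _ = _ := by
        rw [Finset.sum_product]
        simp only [Finset.sum_const, Fintype.card_piFinset, Int.card_Icc, Finset.prod_const,
          Finset.card_univ, Fintype.card_fin, nsmul_eq_mul]
        rw [← Finset.mul_sum]
        congr 1
        have : ((M : ℤ) + 1 - -(M : ℤ)).toNat = 2 * M + 1 := by omega
        rw [this]; push_cast; ring

lemma card_Om_lower (k m M : ℕ) (h : (k + 1) * m ≤ M) : (m : ℝ) ^ (k + 1) ≤ (Om k M).card := by
  have : ((Finset.Icc (1 : ℤ) m) ×ˢ (Fintype.piFinset fun _ : Fin k => Finset.Icc (1 : ℤ) m))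
      ⊆ Om k M := by
    intro x hx
    rw [Finset.mem_product, Finset.mem_Icc, Fintype.mem_piFinset] at hx
    rw [mem_Om]
    intro ω
    rw [L_apply]
    have h1 : 0 ≤ ∑ i, (if ω i then x.2 i else 0) := by
      refine Finset.sum_nonneg fun i _ => ?_
      have := Finset.mem_Icc.mp (hx.2 i)
      split_ifs <;> linarith [this.1]
    have h2 : ∑ i, (if ω i then x.2 i else 0) ≤ ∑ i : Fin k, (m : ℤ) := by
      refine Finset.sum_le_sum fun i _ => ?_
      have := Finset.mem_Icc.mp (hx.2 i)
      split_ifs <;> linarith [this.1, this.2]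
    simp at h2
    have h3 : ((k : ℤ) + 1) * m ≤ M := by exact_mod_cast h
    constructor <;> nlinarith [hx.1.1, hx.1.2]
  have h2 := Finset.card_le_card this
  rw [Finset.card_product, Fintype.card_piFinset] at h2
  simp at h2
  have h3 : m ^ (k + 1) ≤ (Om k M).card := by rw [pow_succ, mul_comm]; exact h2
  exact_mod_cast h3

lemma card_shift {k M : ℕ} (t : V k ℤ) (q : ℕ) (h0 : 0 ≤ t.1 ∧ t.1 ≤ q)
    (h1 : ∀ j, 0 ≤ t.2 j ∧ t.2 j ≤ q) :
    (((Om k M).filter fun x => x + t ∉ Om k M).card : ℝ) ≤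
      2 ^ k * ((2 * M + 1) ^ k * ((k + 1) * q)) := by
  have hLt : ∀ ω : Fin k → Bool, 0 ≤ L ω t ∧ L ω t ≤ ((k + 1) * q : ℕ) := by
    intro ω
    rw [L_apply]
    have e1 : 0 ≤ ∑ i, (if ω i then t.2 i else 0) := by
      refine Finset.sum_nonneg fun i _ => ?_
      split_ifs <;> linarith [(h1 i).1]
    have e2 : ∑ i, (if ω i then t.2 i else 0) ≤ ∑ i : Fin k, (q : ℤ) := by
      refine Finset.sum_le_sum fun i _ => ?_
      split_ifs <;> linarith [(h1 i).1, (h1 i).2]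
    simp at e2
    push_cast
    constructor <;> nlinarith [h0.1, h0.2]
  set T : ℕ := (k + 1) * q with hT
  let G : ℤ → ℝ := fun a => if (M : ℤ) - T < a then 1 else 0
  have hG : ∀ a, 0 ≤ G a := fun a => by dsimp [G]; split_ifs <;> norm_num
  have hGs : ∑ a ∈ Finset.Icc (1 : ℤ) M, G a ≤ T := by
    dsimp [G]
    rw [Finset.sum_boole]
    have : (Finset.Icc (1 : ℤ) M).filter (fun a => (M : ℤ) - T < a)
        ⊆ Finset.Ioc ((M : ℤ) - T) M := by
      intro a ha
      rw [Finset.mem_filter, Finset.mem_Icc] at ha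
      rw [Finset.mem_Ioc]; exact ⟨ha.2, ha.1.2⟩
    have := Finset.card_le_card this
    rw [Int.card_Ioc] at this
    have e : ((M : ℤ) - ((M : ℤ) - T)).toNat = T := by omega
    rw [e] at this
    exact_mod_cast this
  calc (((Om k M).filter fun x => x + t ∉ Om k M).card : ℝ)
      = ∑ x ∈ Om k M, if x + t ∉ Om k M then (1 : ℝ) else 0 := by rw [Finset.sum_boole]
    _ ≤ ∑ x ∈ Om k M, ∑ ω : Fin k → Bool, G (L ω x) := by
        refine Finset.sum_le_sum fun x hx => ?_
        split_ifs with hc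
        · exact Finset.sum_nonneg fun ω _ => hG _
        · rw [mem_Om] at hc
          push Not at hc
          obtain ⟨ω, hω⟩ := hc
          have := mem_Om.mp hx ω
          rw [map_add] at hω
          have h3 := hω (by linarith [this.1, (hLt ω).1])
          refine le_trans ?_ (Finset.single_le_sum (fun ω _ => hG (L ω x)) (Finset.mem_univ ω))
          dsimp [G]
          rw [if_pos (by linarith [(hLt ω).2])]
    _ = ∑ ω : Fin k → Bool, ∑ x ∈ Om k M, G (L ω x) := Finset.sum_comm
    _ ≤ ∑ ω : Fin k → Bool, ((2 * M + 1) ^ k * (T : ℝ)) := by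
        refine Finset.sum_le_sum fun ω _ => (fiber_sum ω G hG).trans ?_
        gcongr
    _ = _ := by simp [hT]

lemma shift_sum {k M : ℕ} (t : V k ℤ) (q : ℕ) (h0 : 0 ≤ t.1 ∧ t.1 ≤ q)
    (h1 : ∀ j, 0 ≤ t.2 j ∧ t.2 j ≤ q) (Φ : V k ℤ → ℝ) (hΦ : ∀ x, |Φ x| ≤ 1) :
    |∑ x ∈ Om k M, Φ (x + t) - ∑ x ∈ Om k M, Φ x| ≤
      2 * (2 ^ k * ((2 * M + 1) ^ k * ((k + 1) * q))) := by
  set A := (Om k M).image (fun x => x + t) with hA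
  have hinj : Function.Injective (fun x : V k ℤ => x + t) := add_left_injective t
  have e1 : ∑ x ∈ Om k M, Φ (x + t) = ∑ x ∈ A, Φ x := by
    rw [hA, Finset.sum_image hinj.injOn]
  have hcard : A.card = (Om k M).card := Finset.card_image_of_injective _ hinj
  have e2 : (A \ Om k M).card = (Om k M \ A).card := Finset.card_sdiff_comm hcard
  have e3 : (A \ Om k M) ⊆ ((Om k M).filter fun x => x + t ∉ Om k M).image (fun x => x + t) := by
    intro y hy
    rw [Finset.mem_sdiff] at hy
    obtain ⟨x, hx, rfl⟩ := Finset.mem_image.mp hy.1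
    exact Finset.mem_image.mpr ⟨x, Finset.mem_filter.mpr ⟨hx, hy.2⟩, rfl⟩
  have e4 : ((A \ Om k M).card : ℝ) ≤ 2 ^ k * ((2 * M + 1) ^ k * ((k + 1) * q)) := by
    refine le_trans ?_ (card_shift (M := M) t q h0 h1)
    exact_mod_cast (Finset.card_le_card e3).trans Finset.card_image_le
  have hb : ∀ B : Finset (V k ℤ), |∑ x ∈ B, Φ x| ≤ B.card := by
    intro B
    refine (Finset.abs_sum_le_sum_abs _ _).trans ?_
    refine (Finset.sum_le_sum fun x _ => hΦ x).trans ?_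
    simp
  rw [e1, ← Finset.sum_sdiff_sub_sum_sdiff]
  have b1 := hb (Om k M \ A)
  have b2 := hb (A \ Om k M)
  rw [← e2] at b1
  rw [abs_le] at *
  constructor <;> linarith [b1.1, b1.2, b2.1, b2.2]


set_option linter.unusedSectionVars false

noncomputable def mean {α : Type} [Fintype α] (F : α → ℝ) : ℝ := (∑ a, F a) / Fintype.card α

lemma mean_const {α : Type} [Fintype α] [Nonempty α] (c : ℝ) : mean (fun _ : α => c) = c := by
  have : (Fintype.card α : ℝ) ≠ 0 := by exact_mod_cast Fintype.card_ne_zero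
  simp [mean]

lemma mean_sum {α β : Type} [Fintype α] (s : Finset β) (F : β → α → ℝ) :
    mean (fun a => ∑ b ∈ s, F b a) = ∑ b ∈ s, mean (F b) := by
  unfold mean
  rw [Finset.sum_comm, Finset.sum_div]

lemma mean_mul {α : Type} [Fintype α] (c : ℝ) (F : α → ℝ) :
    mean (fun a => c * F a) = c * mean F := by
  unfold mean
  rw [← Finset.mul_sum, mul_div_assoc]

lemma mean_mono {α : Type} [Fintype α] (F G : α → ℝ) (h : ∀ a, F a ≤ G a) : mean F ≤ mean G := by
  unfold mean
  gcongr
  exact h _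

lemma mean_abs {α : Type} [Fintype α] (F : α → ℝ) : |mean F| ≤ mean (fun a => |F a|) := by
  unfold mean
  rw [abs_div, Nat.abs_cast]
  gcongr
  exact Finset.abs_sum_le_sum_abs _ _

lemma mean_sub {α : Type} [Fintype α] (F G : α → ℝ) :
    mean (fun a => F a - G a) = mean F - mean G := by
  unfold mean
  rw [Finset.sum_sub_distrib, sub_div]

lemma mean_surj {G H : Type} [AddCommGroup G] [AddCommGroup H] [Fintype G] [Fintype H]
    (φ : G →+ H) (hφ : Function.Surjective φ) (F : H → ℝ) :
    mean (fun g => F (φ g)) = mean F := sum_surj φ hφ F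

lemma mean_pi {ι : Type} [Fintype ι] {α : ι → Type} [∀ i, Fintype (α i)] (F : ∀ i, α i → ℝ) :
    mean (fun y : (∀ i, α i) => ∏ i, F i (y i)) = ∏ i, mean (F i) := by
  unfold mean
  rw [Finset.prod_div_distrib, Finset.prod_univ_sum, Fintype.card_pi]
  simp

section
variable {ι : Type} [Fintype ι] (P : ι → ℕ) [∀ i, NeZero (P i)]

abbrev Y (k : ℕ) := ∀ i, V k (ZMod (P i))

noncomputable def s {k : ℕ} (ω : Fin k → Bool) (y : Y P k) : Finset ι :=
  Finset.univ.filter fun i => L ω (y i) = 0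

noncomputable def red {k : ℕ} (x : V k ℤ) : Y P k := fun i => ((x.1 : ZMod (P i)), fun j => (x.2 j : ZMod (P i)))

lemma red_add {k : ℕ} (x y : V k ℤ) : red P (x + y) = red P x + red P y := by
  funext i
  refine Prod.ext ?_ ?_
  · simp [red]
  · funext j; simp [red]

lemma L_red {k : ℕ} (ω : Fin k → Bool) (x : V k ℤ) (i : ι) :
    L ω (red P x i) = ((L ω x : ℤ) : ZMod (P i)) := by
  rw [L_apply, L_apply]
  simp [red]

lemma mem_s_red {k : ℕ} (ω : Fin k → Bool) (x : V k ℤ) (i : ι) :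
    i ∈ s P ω (red P x) ↔ (P i : ℤ) ∣ L ω x := by
  unfold s
  rw [Finset.mem_filter, L_red, ZMod.intCast_zmod_eq_zero_iff_dvd]
  simp

lemma exists_lift1 (hP : ∀ i, (P i).Prime) (hinj : Function.Injective P)
    (J : Finset ι) (a : ∀ i, ZMod (P i)) :
    ∃ t : ℤ, 0 ≤ t ∧ t ≤ ((∏ i ∈ J, P i : ℕ) : ℤ) ∧ ∀ i ∈ J, (t : ZMod (P i)) = a i := by
  have h1 : ∀ i ∈ J, P i ≠ 0 := fun i _ => (hP i).ne_zero
  have h2 : Set.Pairwise (J : Set ι) (Function.onFun Nat.Coprime P) := by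
    intro i _ j _ hij
    exact (Nat.coprime_primes (hP i) (hP j)).mpr (fun h => hij (hinj h))
  let t := Nat.chineseRemainderOfFinset (fun i => (a i).val) P J h1 h2
  have ht : (t : ℕ) < ∏ i ∈ J, P i := Nat.chineseRemainderOfFinset_lt_prod _ _ h1 h2
  refine ⟨(t : ℕ), by positivity, by exact_mod_cast ht.le, fun i hi => ?_⟩
  have := t.2 i hi
  have h3 := (ZMod.natCast_eq_natCast_iff _ _ _).mpr this
  rw [ZMod.natCast_zmod_val] at h3
  simpa using h3

lemma exists_lift (hP : ∀ i, (P i).Prime) (hinj : Function.Injective P) {k : ℕ}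
    (J : Finset ι) (q : ℕ) (hq : ∏ i ∈ J, P i ≤ q) (y : Y P k) :
    ∃ t : V k ℤ, (0 ≤ t.1 ∧ t.1 ≤ q) ∧ (∀ j, 0 ≤ t.2 j ∧ t.2 j ≤ q) ∧
      ∀ i ∈ J, red P t i = y i := by
  obtain ⟨t0, h1, h2, h3⟩ := exists_lift1 P hP hinj J (fun i => (y i).1)
  have hq' : ((∏ i ∈ J, P i : ℕ) : ℤ) ≤ q := by exact_mod_cast hq
  choose t g1 g2 g3 using fun j => exists_lift1 P hP hinj J (fun i => (y i).2 j)
  refine ⟨(t0, t), ⟨h1, h2.trans hq'⟩, fun j => ⟨g1 j, (g2 j).trans hq'⟩, fun i hi => ?_⟩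
  refine Prod.ext ?_ ?_
  · simpa [red] using h3 i hi
  · funext j; simpa [red] using g3 j i hi

lemma equid (hP : ∀ i, (P i).Prime) (hinj : Function.Injective P) {k : ℕ} (M : ℕ)
    (J : Finset ι) (q : ℕ) (hq : ∏ i ∈ J, P i ≤ q) (Φ : Y P k → ℝ) (hΦ : ∀ y, |Φ y| ≤ 1)
    (hdep : ∀ y y' : Y P k, (∀ i ∈ J, y i = y' i) → Φ y = Φ y') :
    |∑ x ∈ Om k M, Φ (red P x) - (Om k M).card * mean Φ| ≤
      2 * (2 ^ k * ((2 * M + 1) ^ k * ((k + 1) * q))) := by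
  choose t h0 h1 h2 using exists_lift P hP hinj (k := k) J q hq
  have key : ∀ y x, Φ (red P (x + t y)) = Φ (red P x + y) := by
    intro y x
    apply hdep
    intro i hi
    rw [red_add, Pi.add_apply, Pi.add_apply, h2 y i hi]
  have e1 : mean (fun y => ∑ x ∈ Om k M, Φ (red P (x + t y))) = (Om k M).card * mean Φ := by
    rw [mean_sum]
    have : ∀ x ∈ Om k M, mean (fun y => Φ (red P (x + t y))) = mean Φ := by
      intro x _
      simp only [key]
      unfold mean
      congr 1
      exact Equiv.sum_comp (Equiv.addLeft (red P x)) Φ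
    rw [Finset.sum_congr rfl this]
    simp
  have e2 : mean (fun _ : Y P k => ∑ x ∈ Om k M, Φ (red P x)) = ∑ x ∈ Om k M, Φ (red P x) :=
    mean_const _
  rw [← e1, ← e2, ← mean_sub]
  refine (mean_abs _).trans ?_
  rw [← mean_const (α := Y P k) (2 * (2 ^ k * ((2 * M + 1) ^ k * ((k + 1) * q)) : ℝ))]
  refine mean_mono _ _ fun y => ?_
  rw [abs_sub_comm]
  exact shift_sum (t y) q (h0 y) (h1 y) (fun x => Φ (red P x)) (fun x => hΦ _)

lemma pow_card_eq (A : ℝ) (I : Finset ι) : A ^ I.card = ∏ i, (1 + if i ∈ I then A - 1 else 0) := by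
  have : ∀ i, (1 + if i ∈ I then A - 1 else 0) = if i ∈ I then A else 1 := by
    intro i; split_ifs <;> ring
  simp [this]

noncomputable def K : ℝ := ∏ i, (P i : ℝ) / ((P i : ℝ) - 1)

lemma prod_bd (hP : ∀ i, (P i).Prime) (n : ℕ) :
    ∏ i, (1 + (n : ℝ) / P i) ≤ K P ^ n := by
  unfold K
  rw [← Finset.prod_pow]
  refine Finset.prod_le_prod (fun i _ => by positivity) fun i _ => ?_
  have h2 : (2 : ℝ) ≤ P i := by exact_mod_cast (hP i).two_le
  have h1 : 1 + 1 / (P i : ℝ) ≤ (P i : ℝ) / ((P i : ℝ) - 1) := by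
    rw [le_div_iff₀ (by linarith)]
    field_simp
    nlinarith
  calc 1 + (n : ℝ) / P i = 1 + n * (1 / (P i : ℝ)) := by ring
    _ ≤ (1 + 1 / (P i : ℝ)) ^ n := one_add_mul_le_pow
          (by have : 0 ≤ 1 / (P i : ℝ) := by positivity
              linarith) n
    _ ≤ _ := by gcongr

lemma moment_Y (hP : ∀ i, (P i).Prime) {k : ℕ} (ω : Fin k → Bool) (n : ℕ) :
    mean (fun y : Y P k => ((n : ℝ) + 1) ^ (s P ω y).card) ≤ K P ^ n := by
  refine le_trans (le_of_eq ?_) (prod_bd P hP n)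
  have e : (fun y : Y P k => ((n : ℝ) + 1) ^ (s P ω y).card)
      = fun y => ∏ i, (fun v : V k (ZMod (P i)) => 1 + if L ω v = 0 then (n : ℝ) else 0) (y i) := by
    funext y
    rw [pow_card_eq]
    refine Finset.prod_congr rfl fun i _ => ?_
    simp [s]
  rw [e, mean_pi (α := fun i => V k (ZMod (P i)))
    (fun i => fun v : V k (ZMod (P i)) => 1 + if L ω v = 0 then (n : ℝ) else 0)]
  refine Finset.prod_congr rfl fun i _ => ?_
  rw [mean_surj (L ω : V k (ZMod (P i)) →+ ZMod (P i)) (L_surj ω)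
    (fun a => 1 + if a = 0 then (n : ℝ) else 0)]
  have : (P i : ℝ) ≠ 0 := by exact_mod_cast (hP i).ne_zero
  simp [mean, Finset.sum_add_distrib, ZMod.card]
  field_simp

lemma count_mult (hP : ∀ i, (P i).Prime) (hinj : Function.Injective P) (M : ℕ) (J : Finset ι) :
    (((Finset.Icc (1 : ℤ) M).filter fun a => ∀ i ∈ J, (P i : ℤ) ∣ a).card : ℝ)
      ≤ M * ∏ i ∈ J, (1 / (P i : ℝ)) := by
  have h1 : ((Finset.Icc (1 : ℤ) M).filter fun a => ∀ i ∈ J, (P i : ℤ) ∣ a)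
      ⊆ ((Finset.Ioc 0 M).filter fun a => (∏ i ∈ J, P i) ∣ a).image (fun a : ℕ => (a : ℤ)) := by
    intro a ha
    rw [Finset.mem_filter, Finset.mem_Icc] at ha
    obtain ⟨⟨h1, h2⟩, h3⟩ := ha
    lift a to ℕ using by linarith
    refine Finset.mem_image.mpr ⟨a, Finset.mem_filter.mpr ⟨?_, ?_⟩, rfl⟩
    · rw [Finset.mem_Ioc]; constructor
      · exact_mod_cast h1
      · exact_mod_cast h2
    · refine Finset.prod_dvd_of_isRelPrime ?_ (fun i hi => by exact_mod_cast h3 i hi)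
      intro i _ j _ hij
      exact Nat.coprime_iff_isRelPrime.mp
        ((Nat.coprime_primes (hP i) (hP j)).mpr (fun h => hij (hinj h)))
  have h2 := (Finset.card_le_card h1).trans Finset.card_image_le
  rw [Nat.Ioc_filter_dvd_card_eq_div] at h2
  calc _ ≤ ((M / (∏ i ∈ J, P i) : ℕ) : ℝ) := by exact_mod_cast h2
    _ ≤ (M : ℝ) / ((∏ i ∈ J, P i : ℕ) : ℝ) := Nat.cast_div_le
    _ = _ := by
      push_cast
      rw [Finset.prod_div_distrib]; simp [div_eq_mul_inv]

lemma moment_Z (hP : ∀ i, (P i).Prime) (hinj : Function.Injective P) {k : ℕ} (M : ℕ)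
    (ω : Fin k → Bool) (n : ℕ) :
    ∑ x ∈ Om k M, ((n : ℝ) + 1) ^ (s P ω (red P x)).card
      ≤ (2 * M + 1) ^ k * (M * K P ^ n) := by
  let G : ℤ → ℝ := fun a => ((n : ℝ) + 1) ^ (Finset.univ.filter fun i => (P i : ℤ) ∣ a).card
  have hG : ∀ a, 0 ≤ G a := fun a => by dsimp [G]; positivity
  have e : ∀ x : V k ℤ, ((n : ℝ) + 1) ^ (s P ω (red P x)).card = G (L ω x) := by
    intro x
    dsimp [G]
    congr 2
    ext i
    rw [mem_s_red]; simp
  simp only [e]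
  refine (fiber_sum ω G hG).trans ?_
  gcongr
  calc ∑ a ∈ Finset.Icc (1 : ℤ) M, G a
      = ∑ a ∈ Finset.Icc (1 : ℤ) M, ∑ J : Finset ι,
          (n : ℝ) ^ J.card * (if ∀ i ∈ J, (P i : ℤ) ∣ a then 1 else 0) := by
        refine Finset.sum_congr rfl fun a _ => ?_
        dsimp [G]
        rw [pow_card_eq, Finset.prod_one_add, Finset.powerset_univ]
        refine Finset.sum_congr rfl fun J _ => ?_
        simp only [Finset.mem_filter, Finset.mem_univ, true_and, add_sub_cancel_right]
        rw [Finset.prod_ite_zero]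
        split_ifs <;> simp
    _ = ∑ J : Finset ι, (n : ℝ) ^ J.card *
          ((Finset.Icc (1 : ℤ) M).filter fun a => ∀ i ∈ J, (P i : ℤ) ∣ a).card := by
        rw [Finset.sum_comm]
        refine Finset.sum_congr rfl fun J _ => ?_
        rw [← Finset.mul_sum, Finset.sum_boole]
    _ ≤ ∑ J : Finset ι, (n : ℝ) ^ J.card * (M * ∏ i ∈ J, (1 / (P i : ℝ))) := by
        gcongr with J _
        exact count_mult P hP hinj M J
    _ = M * ∏ i, (1 + (n : ℝ) / P i) := by
        rw [Finset.prod_one_add, Finset.powerset_univ, Finset.mul_sum]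
        refine Finset.sum_congr rfl fun J _ => ?_
        simp only [div_eq_mul_inv, one_mul, Finset.prod_mul_distrib, Finset.prod_const]
        ring
    _ ≤ _ := by
        gcongr
        exact prod_bd P hP n


noncomputable def lam (S I : Finset ι) : ℝ :=
  ∏ i ∈ S, if i ∈ I then 0 else (P i : ℝ) / ((P i : ℝ) - 1)

noncomputable def cK (S : Finset ι) : ℝ := ∏ i ∈ S, (P i : ℝ) / ((P i : ℝ) - 1)

lemma fac_ge (hP : ∀ i, (P i).Prime) (i : ι) : 1 ≤ (P i : ℝ) / ((P i : ℝ) - 1) := by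
  have h2 : (2 : ℝ) ≤ P i := by exact_mod_cast (hP i).two_le
  rw [le_div_iff₀ (by linarith)]; linarith

lemma cK_nonneg (hP : ∀ i, (P i).Prime) (S : Finset ι) : 0 ≤ cK P S :=
  Finset.prod_nonneg fun i _ => zero_le_one.trans (fac_ge P hP i)

lemma cK_le (hP : ∀ i, (P i).Prime) (S : Finset ι) : cK P S ≤ K P := by
  unfold cK K
  exact Finset.prod_le_prod_of_subset_of_one_le (Finset.subset_univ S)
    (fun i _ => zero_le_one.trans (fac_ge P hP i)) (fun i _ _ => fac_ge P hP i)

lemma K_ge (hP : ∀ i, (P i).Prime) : 1 ≤ K P := by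
  have := cK_le P hP ∅
  simpa [cK] using this

noncomputable def ind (J I : Finset ι) : ℝ := if J ⊆ I then 1 else 0

noncomputable def co (S J : Finset ι) : ℝ := if J ⊆ S then (-1) ^ J.card * cK P S else 0

lemma lam_eq (S I : Finset ι) : lam P S I = ∑ J : Finset ι, co P S J * ind J I := by
  have e1 : lam P S I = cK P S * ∏ i ∈ S, (1 + if i ∈ I then (-1 : ℝ) else 0) := by
    unfold lam cK
    rw [← Finset.prod_mul_distrib]
    refine Finset.prod_congr rfl fun i _ => ?_
    split_ifs <;> simp
  have e2 : ∑ J : Finset ι, co P S J * ind J I = ∑ J ∈ S.powerset, co P S J * ind J I := by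
    symm
    refine Finset.sum_subset (Finset.subset_univ _) fun J _ hJ => ?_
    rw [Finset.mem_powerset] at hJ
    simp [co, hJ]
  rw [e1, e2, Finset.prod_one_add, Finset.mul_sum]
  refine Finset.sum_congr rfl fun J hJ => ?_
  rw [Finset.mem_powerset] at hJ
  rw [Finset.prod_ite_zero]
  unfold co ind
  rw [if_pos hJ]
  by_cases h : J ⊆ I
  · rw [if_pos h, if_pos (fun i hi => h hi)]; simp; ring
  · rw [if_neg h, if_neg (fun h' => h (fun i hi => h' i hi))]; simp

lemma abs_co (hP : ∀ i, (P i).Prime) (S J : Finset ι) : |co P S J| ≤ K P := by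
  unfold co
  split_ifs
  · rw [abs_mul, abs_pow, abs_neg, abs_one, one_pow, one_mul, abs_of_nonneg (cK_nonneg P hP S)]
    exact cK_le P hP S
  · simpa using zero_le_one.trans (K_ge P hP)

noncomputable def coef (S1 S2 J : Finset ι) : ℝ := co P S1 J - co P S2 J

lemma abs_coef (hP : ∀ i, (P i).Prime) (S1 S2 J : Finset ι) : |coef P S1 S2 J| ≤ 2 * K P := by
  have h1 := abs_co P hP S1 J
  have h2 := abs_co P hP S2 J
  unfold coef
  rw [abs_le] at *
  constructor <;> linarith [h1.1, h1.2, h2.1, h2.2]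

noncomputable def phi (S1 S2 I : Finset ι) : ℝ := lam P S1 I - lam P S2 I

noncomputable def JJ (ι : Type) [Fintype ι] (r : ℕ) : Finset (Finset ι) :=
  Finset.univ.filter fun J => J.card ≤ r

noncomputable def phib (r : ℕ) (S1 S2 I : Finset ι) : ℝ :=
  ∑ J ∈ JJ ι r, coef P S1 S2 J * ind J I

lemma phi_eq (S1 S2 I : Finset ι) :
    phi P S1 S2 I = ∑ J : Finset ι, coef P S1 S2 J * ind J I := by
  unfold phi coef
  rw [lam_eq, lam_eq, ← Finset.sum_sub_distrib]
  refine Finset.sum_congr rfl fun J _ => by ring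

lemma ind_nonneg (J I : Finset ι) : 0 ≤ ind J I := by unfold ind; split_ifs <;> norm_num

lemma ind_le_one (J I : Finset ι) : ind J I ≤ 1 := by unfold ind; split_ifs <;> norm_num

lemma sum_ind (I : Finset ι) : ∑ J : Finset ι, (2 : ℝ) ^ J.card * ind J I = 3 ^ I.card := by
  have e2 : ∑ J : Finset ι, (2 : ℝ) ^ J.card * ind J I
      = ∑ J ∈ I.powerset, (2 : ℝ) ^ J.card * ind J I := by
    symm
    refine Finset.sum_subset (Finset.subset_univ _) fun J _ hJ => ?_
    rw [Finset.mem_powerset] at hJ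
    simp [ind, hJ]
  rw [e2]
  have := Finset.sum_pow_mul_eq_add_pow (2 : ℝ) 1 I
  norm_num at this
  rw [← this]
  refine Finset.sum_congr rfl fun J hJ => ?_
  rw [Finset.mem_powerset] at hJ
  simp [ind, hJ]

lemma partial_bd (hP : ∀ i, (P i).Prime) (S1 S2 I : Finset ι) (A : Finset (Finset ι)) (ε : ℝ)
    (hε : ∀ J ∈ A, 1 ≤ ε * 2 ^ J.card) (hε0 : 0 ≤ ε) :
    |∑ J ∈ A, coef P S1 S2 J * ind J I| ≤ ε * (2 * K P * 3 ^ I.card) := by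
  have hK := K_ge P hP
  calc |∑ J ∈ A, coef P S1 S2 J * ind J I|
      ≤ ∑ J ∈ A, |coef P S1 S2 J * ind J I| := Finset.abs_sum_le_sum_abs _ _
    _ ≤ ∑ J ∈ A, (ε * (2 * K P)) * (2 ^ J.card * ind J I) := by
        refine Finset.sum_le_sum fun J hJ => ?_
        rw [abs_mul, abs_of_nonneg (ind_nonneg J I)]
        have h1 := abs_coef P hP S1 S2 J
        have h2 := hε J hJ
        have h3 : |coef P S1 S2 J| ≤ (ε * 2 ^ J.card) * (2 * K P) := by nlinarith
        calc _ ≤ ((ε * 2 ^ J.card) * (2 * K P)) * ind J I :=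
              mul_le_mul_of_nonneg_right h3 (ind_nonneg J I)
          _ = _ := by ring
    _ ≤ ∑ J : Finset ι, (ε * (2 * K P)) * (2 ^ J.card * ind J I) := by
        refine Finset.sum_le_sum_of_subset_of_nonneg (Finset.subset_univ _) fun J _ _ => ?_
        have := ind_nonneg J I
        positivity
    _ = _ := by rw [← Finset.mul_sum, sum_ind]; ring

lemma abs_phi (hP : ∀ i, (P i).Prime) (S1 S2 I : Finset ι) :
    |phi P S1 S2 I| ≤ 2 * K P * 3 ^ I.card := by
  rw [phi_eq]
  have := partial_bd P hP S1 S2 I Finset.univ 1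
    (fun J _ => by rw [one_mul]; exact one_le_pow₀ (by norm_num)) zero_le_one
  linarith

lemma abs_phib (hP : ∀ i, (P i).Prime) (r : ℕ) (S1 S2 I : Finset ι) :
    |phib P r S1 S2 I| ≤ 2 * K P * 3 ^ I.card := by
  have := partial_bd P hP S1 S2 I (JJ ι r) 1
    (fun J _ => by rw [one_mul]; exact one_le_pow₀ (by norm_num)) zero_le_one
  unfold phib
  linarith

lemma abs_phi_sub (hP : ∀ i, (P i).Prime) (r : ℕ) (S1 S2 I : Finset ι) :
    |phi P S1 S2 I - phib P r S1 S2 I| ≤ (1 / 2) ^ r * (2 * K P * 3 ^ I.card) := by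
  have e : phi P S1 S2 I - phib P r S1 S2 I
      = ∑ J ∈ (Finset.univ.filter fun J : Finset ι => ¬ J.card ≤ r), coef P S1 S2 J * ind J I := by
    rw [phi_eq]
    unfold phib JJ
    rw [← Finset.sum_filter_add_sum_filter_not Finset.univ (fun J : Finset ι => J.card ≤ r)]
    ring
  rw [e]
  refine partial_bd P hP S1 S2 I _ _ ?_ (by positivity)
  intro J hJ
  rw [Finset.mem_filter] at hJ
  have h1 : r ≤ J.card := by omega
  have h2 : (2 : ℝ) ^ r ≤ 2 ^ J.card := pow_le_pow_right₀ (by norm_num) h1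
  calc (1 : ℝ) = (1 / 2) ^ r * 2 ^ r := by rw [← mul_pow]; norm_num
    _ ≤ _ := by gcongr

lemma abs_prod_sub {α : Type} (W : Finset α) (a b B : α → ℝ) (ε : ℝ)
    (h1 : ∀ x ∈ W, |a x| ≤ B x) (h2 : ∀ x ∈ W, |b x| ≤ B x)
    (h3 : ∀ x ∈ W, |a x - b x| ≤ ε * B x) :
    |∏ x ∈ W, a x - ∏ x ∈ W, b x| ≤ W.card * ε * ∏ x ∈ W, B x := by
  induction W using Finset.induction_on with
  | empty => simp
  | insert x W hx ih =>
    rw [Finset.prod_insert hx, Finset.prod_insert hx, Finset.prod_insert hx,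
      Finset.card_insert_of_notMem hx]
    have ih' := ih (fun y hy => h1 y (Finset.mem_insert_of_mem hy))
      (fun y hy => h2 y (Finset.mem_insert_of_mem hy))
      (fun y hy => h3 y (Finset.mem_insert_of_mem hy))
    have hB : |∏ y ∈ W, b y| ≤ ∏ y ∈ W, B y := by
      rw [Finset.abs_prod]
      exact Finset.prod_le_prod (fun y _ => abs_nonneg _)
        (fun y hy => h2 y (Finset.mem_insert_of_mem hy))
    have g1 := h1 x (Finset.mem_insert_self _ _)
    have g3 := h3 x (Finset.mem_insert_self _ _)
    have e : a x * ∏ y ∈ W, a y - b x * ∏ y ∈ W, b y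
      = a x * (∏ y ∈ W, a y - ∏ y ∈ W, b y) + (a x - b x) * ∏ y ∈ W, b y := by ring
    rw [e]
    refine (abs_add_le _ _).trans ?_
    rw [abs_mul, abs_mul]
    have i1 : |a x| * |∏ y ∈ W, a y - ∏ y ∈ W, b y| ≤ B x * (W.card * ε * ∏ x ∈ W, B x) :=
      mul_le_mul g1 ih' (abs_nonneg _) ((abs_nonneg _).trans g1)
    have i2 : |a x - b x| * |∏ y ∈ W, b y| ≤ (ε * B x) * ∏ y ∈ W, B y :=
      mul_le_mul g3 hB (abs_nonneg _) ((abs_nonneg _).trans g3)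
    push_cast
    linarith

noncomputable def F {k : ℕ} (S1 S2 : Finset ι) (y : Y P k) : ℝ :=
  ∏ ω : Fin k → Bool, phi P S1 S2 (s P ω y)

noncomputable def Fb {k : ℕ} (r : ℕ) (S1 S2 : Finset ι) (y : Y P k) : ℝ :=
  ∏ ω : Fin k → Bool, phib P r S1 S2 (s P ω y)

lemma F_sub (hP : ∀ i, (P i).Prime) {k : ℕ} (r : ℕ) (S1 S2 : Finset ι) (y : Y P k) :
    |F P S1 S2 y - Fb P r S1 S2 y| ≤ (2 ^ k * (1 / 2) ^ r * (2 * K P) ^ (2 ^ k)) *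
      ∑ ω : Fin k → Bool, (((3 ^ (2 ^ k) - 1 : ℕ) : ℝ) + 1) ^ (s P ω y).card := by
  have hK := K_ge P hP
  have h := abs_prod_sub (Finset.univ : Finset (Fin k → Bool))
    (fun ω => phi P S1 S2 (s P ω y)) (fun ω => phib P r S1 S2 (s P ω y))
    (fun ω => 2 * K P * 3 ^ (s P ω y).card) ((1 / 2) ^ r)
    (fun ω _ => abs_phi P hP _ _ _) (fun ω _ => abs_phib P hP _ _ _ _)
    (fun ω _ => abs_phi_sub P hP _ _ _ _)
  unfold F Fb
  refine h.trans ?_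
  rw [Finset.prod_mul_distrib, Finset.prod_const, Finset.card_univ]
  simp only [Fintype.card_fun, Fintype.card_bool, Fintype.card_fin]
  push_cast
  rw [← mul_assoc]
  gcongr
  have e : (((3 ^ (2 ^ k) - 1 : ℕ) : ℝ) + 1) = 3 ^ (2 ^ k) := by
    have : 1 ≤ 3 ^ (2 ^ k) := Nat.one_le_pow _ _ (by norm_num)
    rw [Nat.cast_sub this]; push_cast; ring
  rw [e]
  obtain ⟨ω0, _, h0⟩ := Finset.exists_max_image (Finset.univ : Finset (Fin k → Bool))
    (fun ω => (s P ω y).card) Finset.univ_nonempty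
  refine le_trans ?_ (Finset.single_le_sum (f := fun ω => ((3 : ℝ) ^ (2 ^ k)) ^ (s P ω y).card)
    (fun ω _ => by positivity) (Finset.mem_univ ω0))
  calc ∏ ω : Fin k → Bool, (3 : ℝ) ^ (s P ω y).card
      ≤ ∏ ω : Fin k → Bool, (3 : ℝ) ^ (s P ω0 y).card := by
        refine Finset.prod_le_prod (fun _ _ => by positivity) fun ω hω => ?_
        exact pow_le_pow_right₀ (by norm_num) (h0 ω hω)
    _ = _ := by
        simp only [Finset.prod_const, Finset.card_univ, Fintype.card_fun, Fintype.card_bool,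
          Fintype.card_fin]
        rw [← pow_mul, ← pow_mul, mul_comm]

lemma err_Y (hP : ∀ i, (P i).Prime) {k : ℕ} (r : ℕ) (S1 S2 : Finset ι) :
    |mean (F P S1 S2 : Y P k → ℝ) - mean (Fb P r S1 S2 : Y P k → ℝ)| ≤
      (2 ^ k * (1 / 2) ^ r * (2 * K P) ^ (2 ^ k)) * (2 ^ k * K P ^ (3 ^ (2 ^ k) - 1)) := by
  have hK := K_ge P hP
  rw [← mean_sub]
  refine (mean_abs _).trans ?_
  refine (mean_mono _ _ (F_sub P hP r S1 S2)).trans ?_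
  rw [mean_mul, mean_sum]
  gcongr
  refine (Finset.sum_le_sum fun ω _ => moment_Y P hP ω _).trans ?_
  simp

lemma err_Z (hP : ∀ i, (P i).Prime) (hinj : Function.Injective P) {k : ℕ} (M r : ℕ)
    (S1 S2 : Finset ι) :
    |∑ x ∈ Om k M, F P S1 S2 (red P x) - ∑ x ∈ Om k M, Fb P r S1 S2 (red P x)| ≤
      (2 ^ k * (1 / 2) ^ r * (2 * K P) ^ (2 ^ k)) *
        (2 ^ k * ((2 * M + 1) ^ k * (M * K P ^ (3 ^ (2 ^ k) - 1)))) := by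
  have hK := K_ge P hP
  rw [← Finset.sum_sub_distrib]
  refine (Finset.abs_sum_le_sum_abs _ _).trans ?_
  refine (Finset.sum_le_sum fun x _ => F_sub P hP r S1 S2 (red P x)).trans ?_
  rw [← Finset.mul_sum, Finset.sum_comm]
  gcongr
  refine (Finset.sum_le_sum fun ω _ => moment_Z P hP hinj M ω _).trans ?_
  simp

lemma card_JJ (hP : ∀ i, (P i).Prime) (r Q : ℕ) (hQ1 : 1 ≤ Q) (hQ : ∀ i, P i ≤ Q) :
    ((JJ ι r).card : ℝ) ≤ Q ^ r * K P := by
  have h1 := prod_bd P hP 1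
  rw [Finset.prod_one_add, Finset.powerset_univ, pow_one] at h1
  calc ((JJ ι r).card : ℝ) = ∑ J ∈ JJ ι r, (1 : ℝ) := by simp
    _ ≤ ∑ J ∈ JJ ι r, (Q : ℝ) ^ r * ∏ i ∈ J, (((1 : ℕ) : ℝ) / P i) := by
        refine Finset.sum_le_sum fun J hJ => ?_
        have hJ' : J.card ≤ r := (Finset.mem_filter.mp hJ).2
        have e1 : (∏ i ∈ J, (P i : ℝ)) ≤ (Q : ℝ) ^ r := by
          calc (∏ i ∈ J, (P i : ℝ)) ≤ ∏ i ∈ J, (Q : ℝ) :=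
                Finset.prod_le_prod (fun _ _ => by positivity)
                  (fun i _ => by exact_mod_cast hQ i)
            _ = (Q : ℝ) ^ J.card := by simp
            _ ≤ _ := pow_le_pow_right₀ (by exact_mod_cast hQ1) hJ'
        have e2 : 0 < (∏ i ∈ J, (P i : ℝ)) :=
          Finset.prod_pos fun i _ => by exact_mod_cast (hP i).pos
        rw [Finset.prod_div_distrib]
        simp only [Nat.cast_one, Finset.prod_const_one]
        rw [mul_one_div, le_div_iff₀ e2, one_mul]
        exact e1
    _ ≤ ∑ J : Finset ι, (Q : ℝ) ^ r * ∏ i ∈ J, (((1 : ℕ) : ℝ) / P i) :=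
        Finset.sum_le_sum_of_subset_of_nonneg (Finset.subset_univ _) fun J _ _ => by positivity
    _ ≤ _ := by
        rw [← Finset.mul_sum]
        gcongr

lemma main3 (hP : ∀ i, (P i).Prime) (hinj : Function.Injective P) {k : ℕ} (M r Q : ℕ)
    (hQ1 : 1 ≤ Q) (hQ : ∀ i, P i ≤ Q) (S1 S2 : Finset ι) :
    |∑ x ∈ Om k M, Fb P r S1 S2 (red P x) - (Om k M).card * mean (Fb P r S1 S2 : Y P k → ℝ)| ≤
      (Q ^ r * K P) ^ (2 ^ k) * ((2 * K P) ^ (2 ^ k) *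
        (2 * (2 ^ k * ((2 * M + 1) ^ k * ((k + 1) * ((Q ^ (2 ^ k * r) : ℕ) : ℝ)))))) := by
  have hK := K_ge P hP
  set E : ℝ := 2 * (2 ^ k * ((2 * M + 1) ^ k * ((k + 1) * ((Q ^ (2 ^ k * r) : ℕ) : ℝ)))) with hE
  let TT : Finset ((Fin k → Bool) → Finset ι) := Fintype.piFinset fun _ => JJ ι r
  let Ψ : ((Fin k → Bool) → Finset ι) → Y P k → ℝ := fun j y => ∏ ω, ind (j ω) (s P ω y)
  let cc : ((Fin k → Bool) → Finset ι) → ℝ := fun j => ∏ ω, coef P S1 S2 (j ω)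
  have hFb : ∀ y : Y P k, Fb P r S1 S2 y = ∑ j ∈ TT, cc j * Ψ j y := by
    intro y
    unfold Fb phib
    rw [Finset.prod_univ_sum]
    refine Finset.sum_congr rfl fun j _ => ?_
    dsimp only [cc, Ψ]
    rw [Finset.prod_mul_distrib]
  have hm : mean (Fb P r S1 S2 : Y P k → ℝ) = ∑ j ∈ TT, cc j * mean (Ψ j) := by
    have : (Fb P r S1 S2 : Y P k → ℝ) = fun y => ∑ j ∈ TT, cc j * Ψ j y := funext hFb
    rw [this, mean_sum]
    exact Finset.sum_congr rfl fun j _ => mean_mul _ _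
  have hz : ∑ x ∈ Om k M, Fb P r S1 S2 (red P x)
      = ∑ j ∈ TT, cc j * ∑ x ∈ Om k M, Ψ j (red P x) := by
    simp only [hFb]
    rw [Finset.sum_comm]
    exact Finset.sum_congr rfl fun j _ => by rw [Finset.mul_sum]
  rw [hm, hz, Finset.mul_sum, ← Finset.sum_sub_distrib]
  refine (Finset.abs_sum_le_sum_abs _ _).trans ?_
  have hterm : ∀ j ∈ TT, |cc j * ∑ x ∈ Om k M, Ψ j (red P x) -
      (Om k M).card * (cc j * mean (Ψ j))| ≤ (2 * K P) ^ (2 ^ k) * E := by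
    intro j hj
    have hj' : ∀ ω, (j ω).card ≤ r := fun ω =>
      (Finset.mem_filter.mp (Fintype.mem_piFinset.mp hj ω)).2
    have e : cc j * ∑ x ∈ Om k M, Ψ j (red P x) - (Om k M).card * (cc j * mean (Ψ j))
      = cc j * (∑ x ∈ Om k M, Ψ j (red P x) - (Om k M).card * mean (Ψ j)) := by ring
    rw [e, abs_mul]
    refine mul_le_mul ?_ ?_ (abs_nonneg _) (by positivity)
    · dsimp only [cc]
      rw [Finset.abs_prod]
      refine (Finset.prod_le_prod (fun _ _ => abs_nonneg _)
        (fun ω _ => abs_coef P hP S1 S2 (j ω))).trans ?_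
      simp
    · let J : Finset ι := Finset.univ.biUnion j
      have hJc : J.card ≤ 2 ^ k * r := by
        refine Finset.card_biUnion_le.trans ?_
        refine (Finset.sum_le_sum fun ω _ => hj' ω).trans ?_
        simp
      refine equid P hP hinj M J (Q ^ (2 ^ k * r)) ?_ (Ψ j) ?_ ?_
      · refine (Finset.prod_le_prod' (fun i _ => hQ i)).trans ?_
        rw [Finset.prod_const]
        exact Nat.pow_le_pow_right hQ1 hJc
      · intro y
        dsimp only [Ψ]
        rw [abs_of_nonneg (Finset.prod_nonneg fun _ _ => ind_nonneg _ _)]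
        exact Finset.prod_le_one (fun _ _ => ind_nonneg _ _) (fun _ _ => ind_le_one _ _)
      · intro y y' hy
        dsimp only [Ψ]
        refine Finset.prod_congr rfl fun ω _ => ?_
        have : j ω ⊆ s P ω y ↔ j ω ⊆ s P ω y' := by
          constructor
          · intro h i hi
            have h1 := h hi
            have h2 := hy i (Finset.mem_biUnion.mpr ⟨ω, Finset.mem_univ _, hi⟩)
            simp only [s, Finset.mem_filter] at h1 ⊢
            rw [← h2]; exact h1
          · intro h i hi
            have h1 := h hi
            have h2 := hy i (Finset.mem_biUnion.mpr ⟨ω, Finset.mem_univ _, hi⟩)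
            simp only [s, Finset.mem_filter] at h1 ⊢
            rw [h2]; exact h1
        unfold ind
        simp only [this]
  refine (Finset.sum_le_sum hterm).trans ?_
  rw [Finset.sum_const, nsmul_eq_mul]
  gcongr
  have : TT.card = (JJ ι r).card ^ (2 ^ k) := by simp [TT]
  rw [this]
  push_cast
  gcongr
  exact card_JJ P hP r Q hQ1 hQ


noncomputable def gl (p : ℕ) (a : ZMod p) : ℝ := if a = 0 then 0 else (p : ℝ) / ((p : ℝ) - 1)

lemma gl_sub (p : ℕ) (hp : p.Prime) (a : ZMod p) :
    gl p a - 1 = 1 / ((p : ℝ) - 1) + if a = 0 then -(p : ℝ) / ((p : ℝ) - 1) else 0 := by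
  have h2 : (2 : ℝ) ≤ p := by exact_mod_cast hp.two_le
  have h3 : (p : ℝ) - 1 ≠ 0 := by linarith
  unfold gl
  split_ifs
  · field_simp; ring
  · field_simp; ring

lemma abs_gl_sub (p : ℕ) (hp : p.Prime) (a : ZMod p) :
    |gl p a - 1| = 1 / ((p : ℝ) - 1) + if a = 0 then ((p : ℝ) - 2) / ((p : ℝ) - 1) else 0 := by
  have h2 : (2 : ℝ) ≤ p := by exact_mod_cast hp.two_le
  have h3 : (0 : ℝ) < (p : ℝ) - 1 := by linarith
  rw [gl_sub p hp]
  split_ifs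
  · have : 1 / ((p : ℝ) - 1) + -(p : ℝ) / ((p : ℝ) - 1) = -1 := by field_simp; ring
    rw [this, abs_neg, abs_one]; field_simp; ring
  · rw [add_zero, abs_of_nonneg (by positivity)]

lemma abs_gl_sub_le (p : ℕ) (hp : p.Prime) (a : ZMod p) : |gl p a - 1| ≤ 1 := by
  have h2 : (2 : ℝ) ≤ p := by exact_mod_cast hp.two_le
  have h3 : (0 : ℝ) < (p : ℝ) - 1 := by linarith
  rw [abs_gl_sub p hp]
  split_ifs
  · apply le_of_eq; field_simp; ring
  · rw [add_zero, div_le_one h3]; linarith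

lemma mean_gl (p : ℕ) [NeZero p] (hp : p.Prime) : mean (fun a : ZMod p => gl p a - 1) = 0 := by
  have h2 : (2 : ℝ) ≤ p := by exact_mod_cast hp.two_le
  have h3 : (p : ℝ) - 1 ≠ 0 := by linarith
  have h4 : (p : ℝ) ≠ 0 := by linarith
  simp only [gl_sub p hp]
  simp [mean, Finset.sum_add_distrib, ZMod.card]
  left
  field_simp; ring

lemma mean_abs_gl (p : ℕ) [NeZero p] (hp : p.Prime) :
    mean (fun a : ZMod p => |gl p a - 1|) = 2 / p := by
  have h2 : (2 : ℝ) ≤ p := by exact_mod_cast hp.two_le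
  have h3 : (p : ℝ) - 1 ≠ 0 := by linarith
  have h4 : (p : ℝ) ≠ 0 := by linarith
  simp only [abs_gl_sub p hp]
  simp [mean, Finset.sum_add_distrib, ZMod.card]
  field_simp; ring

lemma mean_prod2 {α β : Type} [Fintype α] [Fintype β] (f : α → ℝ) (g : β → ℝ) :
    mean (fun x : α × β => f x.1 * g x.2) = mean f * mean g := by
  unfold mean
  rw [Fintype.sum_prod_type, Fintype.card_prod, div_mul_div_comm, Finset.sum_mul_sum]
  push_cast; rfl

lemma beta {k : ℕ} (p : ℕ) [NeZero p] (hp : p.Prime) (T : Finset (Fin k → Bool)) :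
    |mean (fun v : V k (ZMod p) => ∏ ω ∈ T, gl p (L ω v)) - 1| ≤ 2 ^ (2 ^ k) * 4 / (p : ℝ) ^ 2 := by
  have hU : ∀ U ∈ T.powerset.erase ∅,
      |mean (fun v : V k (ZMod p) => ∏ ω ∈ U, (gl p (L ω v) - 1))| ≤ 4 / (p : ℝ) ^ 2 := by
    intro U hU
    have hne : U.Nonempty := Finset.nonempty_iff_ne_empty.mpr (Finset.ne_of_mem_erase hU)
    obtain ⟨ω1, h1⟩ := hne
    by_cases hc : ∃ ω2 ∈ U, ω1 ≠ ω2
    · obtain ⟨ω2, h2, h12⟩ := hc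
      refine (mean_abs _).trans ?_
      have e : mean (fun v : V k (ZMod p) => |gl p (L ω1 v) - 1| * |gl p (L ω2 v) - 1|)
          = 4 / (p : ℝ) ^ 2 := by
        have h := mean_surj ((L ω1).prod (L ω2) : V k (ZMod p) →+ ZMod p × ZMod p)
          (L2_surj ω1 ω2 h12) (fun x => |gl p x.1 - 1| * |gl p x.2 - 1|)
        simp only [AddMonoidHom.prod_apply] at h
        rw [h, mean_prod2 (fun a : ZMod p => |gl p a - 1|) (fun a : ZMod p => |gl p a - 1|),
          mean_abs_gl p hp]
        ring
      rw [← e]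
      refine mean_mono _ _ fun v => ?_
      rw [Finset.abs_prod, ← Finset.prod_pair (f := fun ω => |gl p (L ω v) - 1|) h12]
      have hsub : ({ω1, ω2} : Finset (Fin k → Bool)) ⊆ U := by
        intro ω hω
        rw [Finset.mem_insert, Finset.mem_singleton] at hω
        rcases hω with rfl | rfl <;> assumption
      rw [← Finset.prod_sdiff hsub]
      refine mul_le_of_le_one_left (Finset.prod_nonneg fun _ _ => abs_nonneg _) ?_
      exact Finset.prod_le_one (fun _ _ => abs_nonneg _) (fun _ _ => abs_gl_sub_le p hp _)
    · push Not at hc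
      have : U = {ω1} := by
        ext ω
        rw [Finset.mem_singleton]
        exact ⟨fun h => (hc ω h).symm, fun h => h ▸ h1⟩
      rw [this]
      simp only [Finset.prod_singleton]
      rw [mean_surj (L ω1 : V k (ZMod p) →+ ZMod p) (L_surj ω1) (fun a => gl p a - 1),
        mean_gl p hp, abs_zero]
      positivity
  have e : mean (fun v : V k (ZMod p) => ∏ ω ∈ T, gl p (L ω v)) - 1
      = ∑ U ∈ T.powerset.erase ∅, mean (fun v : V k (ZMod p) => ∏ ω ∈ U, (gl p (L ω v) - 1)) := by
    have e1 : (fun v : V k (ZMod p) => ∏ ω ∈ T, gl p (L ω v))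
        = fun v => ∑ U ∈ T.powerset, ∏ ω ∈ U, (gl p (L ω v) - 1) := by
      funext v
      rw [← Finset.prod_one_add]
      exact Finset.prod_congr rfl fun ω _ => by ring
    rw [e1, mean_sum, ← Finset.add_sum_erase _ _ (Finset.empty_mem_powerset T)]
    simp only [Finset.prod_empty]
    rw [mean_const]; ring
  rw [e]
  refine (Finset.abs_sum_le_sum_abs _ _).trans ?_
  refine (Finset.sum_le_sum hU).trans ?_
  rw [Finset.sum_const, nsmul_eq_mul, mul_div_assoc]
  gcongr
  have h1 : (T.powerset.erase ∅).card ≤ T.powerset.card := Finset.card_le_card (Finset.erase_subset _ _)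
  rw [Finset.card_powerset] at h1
  have h2 : T.card ≤ 2 ^ k := by
    refine (Finset.card_le_univ T).trans ?_
    simp
  have h3 : 2 ^ T.card ≤ 2 ^ (2 ^ k) := Nat.pow_le_pow_right (by norm_num) h2
  exact_mod_cast h1.trans h3

lemma tail_sum (hinj : Function.Injective P) (m : ℝ) (hm : 1 ≤ m) (A : Finset ι)
    (hA : ∀ i ∈ A, m ≤ P i) : ∑ i ∈ A, ((P i : ℝ) ^ 2)⁻¹ ≤ 2 / m := by
  have hc : 1 ≤ ⌈m⌉₊ := Nat.one_le_iff_ne_zero.mpr (by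
    intro h
    have := Nat.ceil_eq_zero.mp h
    linarith)
  calc ∑ i ∈ A, ((P i : ℝ) ^ 2)⁻¹ = ∑ n ∈ A.image P, ((n : ℝ) ^ 2)⁻¹ := by
        rw [Finset.sum_image hinj.injOn]
    _ ≤ ∑ n ∈ Finset.Ioo (⌈m⌉₊ - 1) ((A.image P).sup id + 1), ((n : ℝ) ^ 2)⁻¹ := by
        refine Finset.sum_le_sum_of_subset_of_nonneg ?_ fun _ _ _ => by positivity
        intro n hn
        have h2 : n ≤ (A.image P).sup id := Finset.le_sup (f := id) hn
        obtain ⟨i, hi, rfl⟩ := Finset.mem_image.mp hn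
        have h1 := Nat.ceil_le.mpr (hA i hi)
        rw [Finset.mem_Ioo]
        omega
    _ ≤ 2 / (((⌈m⌉₊ - 1 : ℕ) : ℝ) + 1) := sum_Ioo_inv_sq_le _ _
    _ ≤ 2 / m := by
        rw [Nat.cast_sub hc]
        have := Nat.le_ceil m
        gcongr
        push_cast; linarith

noncomputable def Dk (k : ℕ) : ℝ := 2 ^ (2 ^ k) * 4

lemma prod_close (hinj : Function.Injective P) (m : ℝ) (hm : 1 ≤ m) (A : Finset ι) (D : ℝ)
    (hD : 0 ≤ D) (hA : ∀ i ∈ A, m ≤ P i) (b : ι → ℝ)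
    (hb : ∀ i ∈ A, |b i - 1| ≤ D / (P i : ℝ) ^ 2) :
    |∏ i ∈ A, b i - 1| ≤ Real.exp (D * (2 / m)) - 1 := by
  have h := Finset.norm_prod_one_add_sub_one_le A (fun i => b i - 1)
  simp only [add_sub_cancel, Real.norm_eq_abs] at h
  refine h.trans ?_
  gcongr
  refine (Finset.sum_le_sum hb).trans ?_
  simp only [div_eq_mul_inv]
  rw [← Finset.mul_sum]
  gcongr
  exact (tail_sum P hinj m hm A hA).trans (by rw [div_eq_mul_inv])

lemma lam_univ {k : ℕ} (S : Finset ι) (ω : Fin k → Bool) (y : Y P k) :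
    lam P S (s P ω y) = ∏ i, if i ∈ S then gl (P i) (L ω (y i)) else 1 := by
  unfold lam
  rw [Finset.prod_ite_mem, Finset.univ_inter]
  refine Finset.prod_congr rfl fun i _ => ?_
  simp [s, gl]

lemma local_main (hP : ∀ i, (P i).Prime) (hinj : Function.Injective P) (k : ℕ) (m : ℝ)
    (hm : 1 ≤ m) (S1 S2 : Finset ι) (h1 : ∀ i, (P i : ℝ) < m → i ∈ S1)
    (h2 : ∀ i, (P i : ℝ) < m → i ∈ S2) :
    |mean (F P S1 S2 : Y P k → ℝ)| ≤
      (Real.exp (2 * Dk k) * 2 ^ (2 ^ k) * (2 * Dk k * Real.exp (2 * Dk k))) / m := by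
  have hD : 0 ≤ Dk k := by unfold Dk; positivity
  let Sel : Finset (Fin k → Bool) → (Fin k → Bool) → Finset ι := fun T ω => if ω ∈ T then S2 else S1
  let Ti : Finset (Fin k → Bool) → ι → Finset (Fin k → Bool) := fun T i =>
    Finset.univ.filter fun ω => i ∈ Sel T ω
  let β : ∀ i, Finset (Fin k → Bool) → ℝ := fun i U =>
    mean (fun v : V k (ZMod (P i)) => ∏ ω ∈ U, gl (P i) (L ω v))
  have hβ : ∀ i U, |β i U - 1| ≤ Dk k / (P i : ℝ) ^ 2 := fun i U => beta (P i) (hP i) U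
  let A : Finset ι := Finset.univ.filter fun i => (P i : ℝ) < m
  let B : ℝ := ∏ i ∈ A, β i Finset.univ
  let R : Finset (Fin k → Bool) → ℝ := fun T => ∏ i ∈ Aᶜ, β i (Ti T i)
  have hF : ∀ y : Y P k, F P S1 S2 y = ∑ T ∈ (Finset.univ : Finset (Fin k → Bool)).powerset,
      (-1) ^ T.card * ∏ i, ∏ ω ∈ Ti T i, gl (P i) (L ω (y i)) := by
    intro y
    unfold F phi
    rw [Finset.prod_sub]
    refine Finset.sum_congr rfl fun T _ => ?_
    rw [mul_assoc]
    congr 1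
    have e1 : ∏ ω : Fin k → Bool, lam P (Sel T ω) (s P ω y)
        = (∏ ω ∈ Finset.univ \ T, lam P S1 (s P ω y)) * ∏ ω ∈ T, lam P S2 (s P ω y) := by
      rw [← Finset.prod_sdiff (Finset.subset_univ T)]
      congr 1
      · refine Finset.prod_congr rfl fun ω hω => ?_
        have : ω ∉ T := (Finset.mem_sdiff.mp hω).2
        simp [Sel, this]
      · refine Finset.prod_congr rfl fun ω hω => ?_
        simp [Sel, hω]
    rw [← e1]
    simp only [lam_univ]
    rw [Finset.prod_comm]
    refine Finset.prod_congr rfl fun i _ => ?_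
    rw [Finset.prod_filter]
  have hmean : mean (F P S1 S2 : Y P k → ℝ)
      = ∑ T ∈ (Finset.univ : Finset (Fin k → Bool)).powerset, (-1) ^ T.card * (B * R T) := by
    have : (F P S1 S2 : Y P k → ℝ) = fun y => _ := funext hF
    rw [this, mean_sum]
    refine Finset.sum_congr rfl fun T _ => ?_
    rw [mean_mul]
    congr 1
    rw [mean_pi (α := fun i => V k (ZMod (P i)))
      (fun i => fun v : V k (ZMod (P i)) => ∏ ω ∈ Ti T i, gl (P i) (L ω v))]
    rw [← Finset.prod_mul_prod_compl A]
    congr 1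
    refine Finset.prod_congr rfl fun i hi => ?_
    have hi' : (P i : ℝ) < m := (Finset.mem_filter.mp hi).2
    have : Ti T i = Finset.univ := by
      ext ω
      simp only [Ti, Sel, Finset.mem_filter, Finset.mem_univ, true_and, iff_true]
      split_ifs
      · exact h2 i hi'
      · exact h1 i hi'
    simp only [β, this]
  have hsgn : ∑ T ∈ (Finset.univ : Finset (Fin k → Bool)).powerset, ((-1 : ℝ)) ^ T.card = 0 := by
    have := Finset.prod_sub (fun _ : Fin k → Bool => (1 : ℝ)) (fun _ => (1 : ℝ)) Finset.univ
    simp only [sub_self, Finset.prod_const_one, mul_one] at this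
    rw [← this]
    simp
  have hB : |B| ≤ Real.exp (2 * Dk k) := by
    have := prod_close P hinj 1 le_rfl A (Dk k) hD
      (fun i _ => by exact_mod_cast (hP i).one_le) (fun i => β i Finset.univ) (fun i _ => hβ i _)
    have h3 : |B| ≤ |B - 1| + 1 := by
      have := abs_add_le (B - 1) 1
      simpa using this
    have e : Dk k * (2 / 1) = 2 * Dk k := by ring
    rw [e] at this
    have h4 : |B - 1| ≤ Real.exp (2 * Dk k) - 1 := this
    linarith
  have hR : ∀ T, |R T - 1| ≤ (2 * Dk k * Real.exp (2 * Dk k)) / m := by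
    intro T
    have := prod_close P hinj m hm Aᶜ (Dk k) hD
      (fun i hi => by simpa [A] using hi) (fun i => β i (Ti T i)) (fun i _ => hβ i _)
    refine le_trans this ?_
    set x := Dk k * (2 / m) with hx
    have hx0 : 0 ≤ x := by positivity
    have hx1 : x ≤ 2 * Dk k := by
      rw [hx, mul_div, mul_comm, div_le_iff₀ (by linarith)]
      nlinarith
    have h5 : Real.exp x - 1 ≤ x * Real.exp x := by
      have := Real.add_one_le_exp (-x)
      have h6 : Real.exp x * Real.exp (-x) = 1 := by rw [← Real.exp_add]; simp
      nlinarith [Real.exp_pos x]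
    calc _ ≤ x * Real.exp x := h5
      _ ≤ x * Real.exp (2 * Dk k) := by gcongr
      _ = _ := by rw [hx]; ring
  have hfin : mean (F P S1 S2 : Y P k → ℝ)
      = ∑ T ∈ (Finset.univ : Finset (Fin k → Bool)).powerset, (-1) ^ T.card * (B * (R T - 1)) := by
    rw [hmean]
    have : ∀ T : Finset (Fin k → Bool), (-1 : ℝ) ^ T.card * (B * (R T - 1))
        = (-1) ^ T.card * (B * R T) - B * (-1) ^ T.card := fun T => by ring
    simp only [this]
    rw [Finset.sum_sub_distrib, ← Finset.mul_sum, hsgn]; ring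
  rw [hfin]
  refine (Finset.abs_sum_le_sum_abs _ _).trans ?_
  calc _ ≤ ∑ T ∈ (Finset.univ : Finset (Fin k → Bool)).powerset,
        Real.exp (2 * Dk k) * ((2 * Dk k * Real.exp (2 * Dk k)) / m) := by
        refine Finset.sum_le_sum fun T _ => ?_
        rw [abs_mul, abs_mul, abs_pow, abs_neg, abs_one, one_pow, one_mul]
        exact mul_le_mul hB (hR T) (abs_nonneg _) (by positivity)
    _ = _ := by
        rw [Finset.sum_const, Finset.card_powerset]
        simp
        ring

lemma core (hP : ∀ i, (P i).Prime) (hinj : Function.Injective P) (k M r Q : ℕ) (m : ℝ)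
    (hm : 1 ≤ m) (hQ1 : 1 ≤ Q) (hQ : ∀ i, P i ≤ Q) (hKQ : K P ≤ Q)
    (S1 S2 : Finset ι) (h1 : ∀ i, (P i : ℝ) < m → i ∈ S1)
    (h2 : ∀ i, (P i : ℝ) < m → i ∈ S2) :
    |∑ x ∈ Om k M, F P S1 S2 (red P x)| ≤
      (Om k M).card * ((Real.exp (2 * Dk k) * 2 ^ (2 ^ k) * (2 * Dk k * Real.exp (2 * Dk k))) / m)
      + ((2 ^ k * (1 / 2) ^ r * (2 * Q) ^ (2 ^ k)) *
        (2 ^ k * ((2 * M + 1) ^ k * (M * Q ^ (3 ^ (2 ^ k) - 1))))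
      + (Om k M).card *
        ((2 ^ k * (1 / 2) ^ r * (2 * Q) ^ (2 ^ k)) * (2 ^ k * Q ^ (3 ^ (2 ^ k) - 1)))
      + (Q ^ r * Q) ^ (2 ^ k) * ((2 * Q) ^ (2 ^ k) *
        (2 * (2 ^ k * ((2 * M + 1) ^ k * ((k + 1) * (Q ^ (2 ^ k * r) : ℝ))))))) := by
  have hK := K_ge P hP
  have a1 := local_main P hP hinj k m hm S1 S2 h1 h2
  have a2 := err_Z P hP hinj (k := k) M r S1 S2
  have a3 := err_Y P hP (k := k) r S1 S2
  have a4 := main3 P hP hinj (k := k) M r Q hQ1 hQ S1 S2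
  have b2 := le_trans a2 (c := (2 ^ k * (1 / 2) ^ r * (2 * (Q : ℝ)) ^ (2 ^ k)) *
        (2 ^ k * ((2 * (M : ℝ) + 1) ^ k * (M * (Q : ℝ) ^ (3 ^ (2 ^ k) - 1))))) (by gcongr)
  have b3 := le_trans a3 (c := (2 ^ k * (1 / 2) ^ r * (2 * (Q : ℝ)) ^ (2 ^ k)) *
    (2 ^ k * (Q : ℝ) ^ (3 ^ (2 ^ k) - 1))) (by gcongr)
  have b4 := le_trans a4 (c := ((Q : ℝ) ^ r * Q) ^ (2 ^ k) * ((2 * (Q : ℝ)) ^ (2 ^ k) *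
        (2 * (2 ^ k * ((2 * (M : ℝ) + 1) ^ k * ((k + 1) * ((Q : ℝ) ^ (2 ^ k * r))))))))
    (by push_cast; gcongr)
  have e : ∑ x ∈ Om k M, F P S1 S2 (red P x)
      = (Om k M).card * mean (F P S1 S2 : Y P k → ℝ)
        + ((∑ x ∈ Om k M, F P S1 S2 (red P x) - ∑ x ∈ Om k M, Fb P r S1 S2 (red P x))
        + -((Om k M).card * (mean (F P S1 S2 : Y P k → ℝ) - mean (Fb P r S1 S2 : Y P k → ℝ)))
        + (∑ x ∈ Om k M, Fb P r S1 S2 (red P x)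
            - (Om k M).card * mean (Fb P r S1 S2 : Y P k → ℝ))) := by ring
  rw [e]
  refine (abs_add_le _ _).trans (add_le_add ?_ ((abs_add_le _ _).trans (add_le_add
    ((abs_add_le _ _).trans (add_le_add b2 ?_)) b4)))
  · rw [abs_mul, Nat.abs_cast]
    exact mul_le_mul_of_nonneg_left a1 (Nat.cast_nonneg _)
  · rw [abs_neg, abs_mul, Nat.abs_cast]
    exact mul_le_mul_of_nonneg_left b3 (Nat.cast_nonneg _)


end

lemma exp_bd (u : ℝ) (hu : 0 < u) : Real.exp (-u) ≤ (Nat.factorial 10 : ℝ) / u ^ 10 := by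
  have h := Real.pow_div_factorial_le_exp u hu.le 10
  rw [Real.exp_neg, inv_eq_one_div, div_le_div_iff₀ (Real.exp_pos u) (by positivity)]
  rw [div_le_iff₀ (by positivity)] at h
  linarith

lemma claimA (T n : ℕ) (hT : 1 ≤ T) (u Q : ℝ) (r : ℕ) (hu1 : 1 ≤ u)
    (hu2 : 16 * T * (T + n + 1) ≤ u) (hQ0 : 0 ≤ Q) (hQ : Q ≤ Real.exp u)
    (hr : u ^ 9 / (8 * T) ≤ r + 1) :
    (1 / 2 : ℝ) ^ r * Q ^ (T + n) ≤ (Real.exp (1 / 2) * (Nat.factorial 10 : ℝ)) / u ^ 10 := by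
  have hT' : (1 : ℝ) ≤ T := by exact_mod_cast hT
  have h1 : (1 / 2 : ℝ) ≤ Real.exp (-(1 / 2)) := by
    have := Real.add_one_le_exp (-(1 / 2) : ℝ)
    linarith
  have h2 : (1 / 2 : ℝ) ^ r ≤ Real.exp (-(r / 2 : ℝ)) := by
    calc (1 / 2 : ℝ) ^ r ≤ Real.exp (-(1 / 2)) ^ r := by gcongr
      _ = _ := by rw [← Real.exp_nat_mul]; congr 1; ring
  have h3 : Q ^ (T + n) ≤ Real.exp ((T + n) * u) := by
    calc Q ^ (T + n) ≤ Real.exp u ^ (T + n) := by gcongr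
      _ = _ := by rw [← Real.exp_nat_mul]; push_cast; rfl
  have h4 : (T + n + 1) * u ≤ u ^ 9 / (16 * T) := by
    rw [le_div_iff₀ (by positivity)]
    have : u ^ 2 ≤ u ^ 9 := pow_le_pow_right₀ hu1 (by norm_num)
    nlinarith
  have h5 : u ^ 9 / (8 * T) = 2 * (u ^ 9 / (16 * T)) := by field_simp; norm_num
  calc (1 / 2 : ℝ) ^ r * Q ^ (T + n) ≤ Real.exp (-(r / 2 : ℝ)) * Real.exp ((T + n) * u) := by
        gcongr
    _ = Real.exp (-(r / 2 : ℝ) + (T + n) * u) := by rw [Real.exp_add]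
    _ ≤ Real.exp (1 / 2 + -u) := by
        apply Real.exp_le_exp.mpr
        linarith
    _ = Real.exp (1 / 2) * Real.exp (-u) := Real.exp_add _ _
    _ ≤ Real.exp (1 / 2) * ((Nat.factorial 10 : ℝ) / u ^ 10) := by
        gcongr
        exact exp_bd u (by linarith)
    _ = _ := by ring

lemma claimB (T : ℕ) (hT : 1 ≤ T) (u Q : ℝ) (r : ℕ) (hu1 : 1 ≤ u)
    (hu2 : 4 * T + 2 ≤ u) (hQ0 : 0 ≤ Q) (hQ : Q ≤ Real.exp u)
    (hr : r ≤ u ^ 9 / (8 * T)) :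
    Q ^ (2 * T * (r + 1)) ≤ Real.exp (u ^ 10) *
      ((Real.exp (1 / 2) * (Nat.factorial 10 : ℝ)) / u ^ 10) := by
  have hT' : (1 : ℝ) ≤ T := by exact_mod_cast hT
  have h3 : Q ^ (2 * T * (r + 1)) ≤ Real.exp ((2 * T * (r + 1)) * u) := by
    calc Q ^ (2 * T * (r + 1)) ≤ Real.exp u ^ (2 * T * (r + 1)) := by gcongr
      _ = _ := by rw [← Real.exp_nat_mul]; push_cast; rfl
  rw [le_div_iff₀ (by positivity)] at hr
  have h4 : (2 * T * (r + 1)) * u ≤ u ^ 10 + -u := by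
    have h5 : u ^ 2 ≤ u ^ 10 := pow_le_pow_right₀ hu1 (by norm_num)
    have h6 : (r * (8 * T)) * u ≤ u ^ 9 * u := mul_le_mul_of_nonneg_right hr (by linarith)
    have h7 : u ^ 9 * u = u ^ 10 := by ring
    nlinarith
  calc _ ≤ _ := h3
    _ ≤ Real.exp (u ^ 10 + -u) := Real.exp_le_exp.mpr h4
    _ = Real.exp (u ^ 10) * (1 * Real.exp (-u)) := by rw [Real.exp_add, one_mul]
    _ ≤ Real.exp (u ^ 10) * (Real.exp (1 / 2) * ((Nat.factorial 10 : ℝ) / u ^ 10)) := by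
        gcongr
        · exact Real.one_le_exp (by norm_num)
        · exact exp_bd u (by linarith)
    _ = _ := by ring

noncomputable def err (k M r Q : ℕ) : ℝ :=
  ((2 ^ k * (1 / 2) ^ r * (2 * Q) ^ (2 ^ k)) *
        (2 ^ k * ((2 * M + 1) ^ k * (M * Q ^ (3 ^ (2 ^ k) - 1))))
      + (Om k M).card *
        ((2 ^ k * (1 / 2) ^ r * (2 * Q) ^ (2 ^ k)) * (2 ^ k * Q ^ (3 ^ (2 ^ k) - 1)))
      + (Q ^ r * Q) ^ (2 ^ k) * ((2 * Q) ^ (2 ^ k) *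
        (2 * (2 ^ k * ((2 * M + 1) ^ k * ((k + 1) * (Q ^ (2 ^ k * r) : ℝ)))))))

lemma asym (k : ℕ) : ∃ C u0 : ℝ, 0 < C ∧ 1 ≤ u0 ∧ ∀ u N : ℝ, u0 ≤ u → N = Real.exp (u ^ 10) →
    0 < (Om k ⌊N⌋₊).card ∧
    ∃ r : ℕ, err k ⌊N⌋₊ r ⌊Real.exp u⌋₊ ≤ (Om k ⌊N⌋₊).card * (C / u ^ 10) := by
  set T : ℕ := 2 ^ k with hT
  set n : ℕ := 3 ^ T - 1 with hn
  have hT1 : 1 ≤ T := Nat.one_le_two_pow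
  set a : ℝ := (4 * (k + 1)) ^ (k + 1) with ha
  have ha0 : 0 < a := by positivity
  set D : ℝ := Real.exp (1 / 2) * (Nat.factorial 10 : ℝ) with hD
  have hD0 : 0 < D := by positivity
  refine ⟨(T * T * 2 ^ T * 3 ^ k * a + T * T * 2 ^ T + 2 ^ T * 2 * T * (k + 1) * 3 ^ k * a) * D,
    1 + 16 * T * (T + n + 1) + (4 * T + 2) + 4 * (k + 2), by positivity, ?_, ?_⟩
  · have : (0 : ℝ) ≤ 16 * T * (T + n + 1) + (4 * T + 2) + 4 * (k + 2) := by positivity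
    linarith
  intro u N hu hN
  have p1 : (0 : ℝ) ≤ 16 * T * (T + n + 1) := by positivity
  have p2 : (0 : ℝ) ≤ 4 * T + 2 := by positivity
  have p3 : (0 : ℝ) ≤ 4 * ((k : ℝ) + 2) := by positivity
  have hu1 : 1 ≤ u := by linarith
  have hNu : u ≤ N := by
    have h1 : u ^ 1 ≤ u ^ 10 := pow_le_pow_right₀ hu1 (by norm_num)
    have h2 := Real.add_one_le_exp (u ^ 10)
    rw [hN]; linarith
  have hN0 : 0 < N := by linarith
  have hN1 : 1 ≤ N := by linarith
  set M := ⌊N⌋₊ with hM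
  have hMN : (M : ℝ) ≤ N := Nat.floor_le hN0.le
  have hMN' : N < M + 1 := Nat.lt_floor_add_one N
  have hX : N ^ (k + 1) ≤ a * (Om k M).card := by
    have h1 := card_Om_lower k (M / (k + 1)) M (Nat.mul_div_le M (k + 1))
    have h2 : N ≤ 4 * (k + 1) * ((M / (k + 1) : ℕ) : ℝ) := by
      have h3 : M < (k + 1) * (M / (k + 1) + 1) := Nat.lt_mul_div_succ M (by omega)
      have h4 : (M : ℝ) < (k + 1) * (((M / (k + 1) : ℕ) : ℝ) + 1) := by exact_mod_cast h3
      nlinarith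
    calc N ^ (k + 1) ≤ (4 * (k + 1) * ((M / (k + 1) : ℕ) : ℝ)) ^ (k + 1) := by gcongr
      _ = a * ((M / (k + 1) : ℕ) : ℝ) ^ (k + 1) := by rw [mul_pow]
      _ ≤ _ := by gcongr
  set X : ℝ := ((Om k M).card : ℝ) with hXdef
  have hX0 : 0 < X := by
    have : 0 < N ^ (k + 1) := by positivity
    by_contra h
    push Not at h
    nlinarith
  refine ⟨Nat.cast_pos.mp hX0, ⌊u ^ 9 / (8 * T)⌋₊, ?_⟩
  set r := ⌊u ^ 9 / (8 * T)⌋₊ with hr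
  have hr1 : (r : ℝ) ≤ u ^ 9 / (8 * T) := Nat.floor_le (by positivity)
  have hr2 : u ^ 9 / (8 * T) ≤ r + 1 := (Nat.lt_floor_add_one _).le
  set Qn := ⌊Real.exp u⌋₊ with hQn
  have hQ : (Qn : ℝ) ≤ Real.exp u := Nat.floor_le (Real.exp_pos u).le
  have hQ0 : (0 : ℝ) ≤ Qn := Nat.cast_nonneg _
  have cA := claimA T n hT1 u Qn r hu1 (by linarith) hQ0 hQ hr2
  have cB := claimB T hT1 u Qn r hu1 (by linarith) hQ0 hQ hr1
  rw [← hN] at cB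
  rw [← hD] at cA cB
  have h2M : (2 * (M : ℝ) + 1) ^ k ≤ 3 ^ k * N ^ k := by
    rw [← mul_pow]
    gcongr
    linarith
  have hMM : (2 * (M : ℝ) + 1) ^ k * M ≤ 3 ^ k * (a * X) := by
    calc (2 * (M : ℝ) + 1) ^ k * M ≤ (3 ^ k * N ^ k) * N := by gcongr
      _ = 3 ^ k * N ^ (k + 1) := by ring
      _ ≤ _ := by gcongr
  have hNk : (2 * (M : ℝ) + 1) ^ k * N ≤ 3 ^ k * (a * X) := by
    calc (2 * (M : ℝ) + 1) ^ k * N ≤ (3 ^ k * N ^ k) * N := by gcongr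
      _ = 3 ^ k * N ^ (k + 1) := by ring
      _ ≤ _ := by gcongr
  unfold err
  have hTr : (2 : ℝ) ^ k = T := by rw [hT]; push_cast; rfl
  rw [← hT, ← hn, hTr]
  have t1 : ((T : ℝ) * (1 / 2) ^ r * (2 * Qn) ^ T) *
        (T * ((2 * M + 1) ^ k * (M * Qn ^ n))) ≤ (T * T * 2 ^ T * 3 ^ k * a) * X * (D / u ^ 10) := by
    calc _ = T * T * 2 ^ T * ((2 * (M : ℝ) + 1) ^ k * M) * ((1 / 2 : ℝ) ^ r * Qn ^ (T + n)) := by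
          rw [mul_pow, pow_add]; ring
      _ ≤ T * T * 2 ^ T * (3 ^ k * (a * X)) * (D / u ^ 10) := by gcongr
      _ = _ := by ring
  have t2 : X * (((T : ℝ) * (1 / 2) ^ r * (2 * Qn) ^ T) * (T * Qn ^ n))
      ≤ (T * T * 2 ^ T) * X * (D / u ^ 10) := by
    calc _ = T * T * 2 ^ T * X * ((1 / 2 : ℝ) ^ r * Qn ^ (T + n)) := by
          rw [mul_pow, pow_add]; ring
      _ ≤ _ := by gcongr
  have t3 : ((Qn : ℝ) ^ r * Qn) ^ T * ((2 * Qn) ^ T *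
        (2 * (T * ((2 * M + 1) ^ k * ((k + 1) * (Qn ^ (T * r) : ℝ))))))
      ≤ (2 ^ T * 2 * T * (k + 1) * 3 ^ k * a) * X * (D / u ^ 10) := by
    calc _ = 2 ^ T * 2 * T * (k + 1) * ((2 * (M : ℝ) + 1) ^ k) * (Qn : ℝ) ^ (2 * T * (r + 1)) := by
          have : 2 * T * (r + 1) = r * T + T + T + T * r := by ring
          rw [this, pow_add, pow_add, pow_add, mul_pow, mul_pow, ← pow_mul]; ring
      _ ≤ 2 ^ T * 2 * T * (k + 1) * ((2 * (M : ℝ) + 1) ^ k) * (N * (D / u ^ 10)) := by gcongr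
      _ = 2 ^ T * 2 * T * (k + 1) * ((2 * (M : ℝ) + 1) ^ k * N) * (D / u ^ 10) := by ring
      _ ≤ 2 ^ T * 2 * T * (k + 1) * (3 ^ k * (a * X)) * (D / u ^ 10) := by gcongr
      _ = _ := by ring
  refine (add_le_add (add_le_add t1 t2) t3).trans (le_of_eq ?_)
  ring

lemma conj_iter (j : ℕ) (x : ℝ) : (⇑(starRingEnd ℂ))^[j] (x : ℂ) = x := by
  induction j with
  | zero => rfl
  | succ j ih => rw [Function.iterate_succ_apply', ih, Complex.conj_ofReal]

lemma gowers_eq (k : ℕ) (N : ℝ) (hN : 0 ≤ N) (g : ℤ → ℝ) :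
    ∑' nh : ℤ × (Fin k → ℤ), gowersProd k (truncN N (fun n => (g n : ℂ))) nh.1 nh.2
      = ((∑ x ∈ Om k ⌊N⌋₊, ∏ ω : Fin k → Bool, g (L ω x) : ℝ) : ℂ) := by
  have key : ∀ x : V k ℤ, gowersProd k (truncN N (fun n => (g n : ℂ))) x.1 x.2
      = ((if x ∈ Om k ⌊N⌋₊ then ∏ ω : Fin k → Bool, g (L ω x) else 0 : ℝ) : ℂ) := by
    intro x
    have htr : ∀ a : ℤ, truncN N (fun n => (g n : ℂ)) a
        = ((if 1 ≤ a ∧ a ≤ (⌊N⌋₊ : ℤ) then g a else 0 : ℝ) : ℂ) := by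
      intro a
      unfold truncN
      have : (1 ≤ a ∧ (a : ℝ) ≤ N) ↔ (1 ≤ a ∧ a ≤ (⌊N⌋₊ : ℤ)) := by
        rw [Int.natCast_floor_eq_floor hN, Int.le_floor]
      simp only [this]
      split_ifs <;> simp
    unfold gowersProd
    simp only [htr, conj_iter]
    rw [← Complex.ofReal_prod]
    congr 1
    change ∏ ω : Fin k → Bool, (if 1 ≤ L ω x ∧ L ω x ≤ (⌊N⌋₊ : ℤ) then g (L ω x) else 0) = _
    rw [Finset.prod_ite_zero]
    simp only [mem_Om, Finset.mem_univ, true_implies]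
  rw [tsum_eq_sum (s := Om k ⌊N⌋₊)]
  · rw [Complex.ofReal_sum]
    refine Finset.sum_congr rfl fun x hx => ?_
    rw [key, if_pos hx]
  · intro x hx
    rw [key, if_neg hx]; simp

lemma gowersUN_le (k : ℕ) (N : ℝ) (hN : 0 ≤ N) (g : ℤ → ℝ) (E : ℝ)
    (hO : 0 < (Om k ⌊N⌋₊).card)
    (h : |∑ x ∈ Om k ⌊N⌋₊, ∏ ω : Fin k → Bool, g (L ω x)| ≤ (Om k ⌊N⌋₊).card * E) :
    gowersUN k N (fun n => (g n : ℂ)) ≤ E ^ ((1 : ℝ) / 2 ^ k) := by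
  unfold gowersUN gowersTildeU
  have e1 : (fun _ : ℤ => (1 : ℂ)) = fun n => (((fun _ => 1 : ℤ → ℝ) n : ℝ) : ℂ) := by simp
  rw [e1, gowers_eq k N hN, gowers_eq k N hN, Complex.ofReal_re, Complex.ofReal_re]
  simp only [Finset.prod_const_one, Finset.sum_const, nsmul_eq_mul, mul_one]
  set X : ℝ := ((Om k ⌊N⌋₊).card : ℝ)
  have hX : 0 < X := Nat.cast_pos.mpr hO
  have hE : 0 ≤ E := by
    by_contra hc
    push Not at hc
    nlinarith [abs_nonneg (∑ x ∈ Om k ⌊N⌋₊, ∏ ω : Fin k → Bool, g (L ω x))]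
  rw [div_le_iff₀ (by positivity), ← Real.mul_rpow hE hX.le, mul_comm E]
  refine (le_abs_self _).trans ((Real.abs_rpow_le_abs_rpow _ _).trans ?_)
  gcongr


noncomputable abbrev PI (n : ℕ) : Type := {p // p ∈ (Finset.range (n + 1)).filter Nat.Prime}

lemma PI_prime {n : ℕ} (i : PI n) : (i.1).Prime := (Finset.mem_filter.mp i.2).2

lemma PI_le {n : ℕ} (i : PI n) : i.1 ≤ n := by
  have := (Finset.mem_range.mp (Finset.mem_filter.mp i.2).1)
  omega

lemma PI_card_bound (n : ℕ) (hn : 1 ≤ n) :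
    ∏ p ∈ (Finset.range (n + 1)).filter Nat.Prime, (p : ℝ) / ((p : ℝ) - 1) ≤ n := by
  induction n, hn using Nat.le_induction with
  | base =>
    rw [Finset.prod_eq_one]
    · simp
    · intro p hp
      exfalso
      have h := (Finset.mem_filter.mp hp)
      have h1 := Finset.mem_range.mp h.1
      have h2 := h.2.two_le
      omega
  | succ n hn ih =>
    have hn' : (1 : ℝ) ≤ n := by exact_mod_cast hn
    rw [Finset.range_add_one, Finset.filter_insert]
    split_ifs with hp
    · rw [Finset.prod_insert (by simp)]
      calc _ ≤ (((n + 1 : ℕ) : ℝ) / (((n + 1 : ℕ) : ℝ) - 1)) * n := by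
            gcongr
            push_cast
            apply div_nonneg <;> linarith
        _ = _ := by
            push_cast
            rw [add_sub_cancel_right, div_mul_cancel₀ _ (by positivity)]
    · refine ih.trans ?_
      push_cast; linarith

lemma cramer_lam (n : ℕ) (w : ℝ) (hw : ∀ p : ℕ, (p : ℝ) < w → p ≤ n) (a : ℤ)
    (I : Finset (PI n)) (hI : ∀ i : PI n, i ∈ I ↔ (i.1 : ℤ) ∣ a) :
    cramer w a = lam (fun i : PI n => i.1)
      (Finset.univ.filter fun i : PI n => ((i.1 : ℕ) : ℝ) < w) I := by
  unfold cramer lam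
  symm
  refine Finset.prod_bij (fun i _ => i.1) ?_ ?_ ?_ ?_
  · intro i hi
    have h := (Finset.mem_filter.mp hi).2
    refine Finset.mem_filter.mpr ⟨Finset.mem_range.mpr ?_, PI_prime i, h⟩
    have := h.le.trans (Nat.le_ceil w)
    have : i.1 ≤ ⌈w⌉₊ := by exact_mod_cast this
    omega
  · intro i _ j _ h
    exact Subtype.ext h
  · intro p hp
    have h := (Finset.mem_filter.mp hp).2
    refine ⟨⟨p, Finset.mem_filter.mpr ⟨Finset.mem_range.mpr ?_, h.1⟩⟩, ?_, rfl⟩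
    · have := hw p h.2
      omega
    · exact Finset.mem_filter.mpr ⟨Finset.mem_univ _, h.2⟩
  · intro i _
    simp only [hI]

lemma final (k : ℕ) :
    ∃ c C : ℝ, 0 < c ∧ 0 < C ∧ ∃ N₀ : ℝ, ∀ N : ℝ, N₀ ≤ N →
      ∀ w z : ℝ, 2 ≤ w → w ≤ Qparam N → 2 ≤ z → z ≤ Qparam N →
        gowersUN k N (fun n => ((cramer w n : ℝ) : ℂ) - ((cramer z n : ℝ) : ℂ))
          ≤ C * (Real.log N ^ (-c) + w ^ (-c) + z ^ (-c)) := by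
  obtain ⟨C, u0, hC, hu0, H⟩ := asym k
  set C1 : ℝ := Real.exp (2 * Dk k) * 2 ^ (2 ^ k) * (2 * Dk k * Real.exp (2 * Dk k)) with hC1
  have hC1p : 0 < C1 := by rw [hC1]; unfold Dk; positivity
  have hc0 : (0 : ℝ) < 1 / 2 ^ k := by positivity
  have hc1 : (1 : ℝ) / 2 ^ k ≤ 1 := by
    rw [div_le_one (by positivity)]; exact one_le_pow₀ (by norm_num)
  refine ⟨1 / 2 ^ k, C1 ^ ((1 : ℝ) / 2 ^ k) + C ^ ((1 : ℝ) / 2 ^ k), hc0, by positivity,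
    Real.exp (u0 ^ 10), ?_⟩
  intro N hN w z hw hwQ hz hzQ
  have hN0 : 0 < N := (Real.exp_pos _).trans_le hN
  have hlog : u0 ^ 10 ≤ Real.log N := (Real.le_log_iff_exp_le hN0).mpr hN
  have hlog0 : 0 < Real.log N := lt_of_lt_of_le (by positivity) hlog
  set u : ℝ := Real.log N ^ ((1 : ℝ) / 10) with hu
  have hu10 : u ^ 10 = Real.log N := by
    rw [hu, ← Real.rpow_natCast, ← Real.rpow_mul hlog0.le]; norm_num
  have hupos : 0 < u := Real.rpow_pos_of_pos hlog0 _
  have huu : u0 ≤ u := by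
    by_contra hc
    push Not at hc
    have := pow_lt_pow_left₀ hc hupos.le (n := 10) (by norm_num)
    linarith
  obtain ⟨hO, r, hr⟩ := H u N huu (by rw [hu10, Real.exp_log hN0])
  have hQe : Qparam N = Real.exp u := rfl
  rw [hQe] at hwQ hzQ
  set n := ⌊Real.exp u⌋₊ with hn
  have hn1 : 1 ≤ n := Nat.le_floor (by simpa using Real.one_le_exp hupos.le)
  have hfl : ∀ v : ℝ, v ≤ Real.exp u → ∀ p : ℕ, (p : ℝ) < v → p ≤ n :=
    fun v hv p hp => Nat.le_floor (hp.le.trans hv)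
  haveI : ∀ i : PI n, NeZero ((fun i : PI n => i.1) i) := fun i => ⟨(PI_prime i).ne_zero⟩
  set m := min w z with hm
  have hm2 : 2 ≤ m := le_min hw hz
  have hcore := core (fun i : PI n => i.1) PI_prime Subtype.val_injective k ⌊N⌋₊ r n m
    (by linarith) hn1 PI_le (by
      unfold K
      refine le_trans (le_of_eq ?_) (PI_card_bound n hn1)
      exact Finset.prod_coe_sort ((Finset.range (n + 1)).filter Nat.Prime)
        (fun p : ℕ => (p : ℝ) / ((p : ℝ) - 1)))
    (Finset.univ.filter fun i : PI n => ((i.1 : ℕ) : ℝ) < w)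
    (Finset.univ.filter fun i : PI n => ((i.1 : ℕ) : ℝ) < z)
    (fun i hi => Finset.mem_filter.mpr ⟨Finset.mem_univ _, hi.trans_le (min_le_left _ _)⟩)
    (fun i hi => Finset.mem_filter.mpr ⟨Finset.mem_univ _, hi.trans_le (min_le_right _ _)⟩)
  have hE := gowersUN_le k N hN0.le (fun a => cramer w a - cramer z a)
    (C1 / m + C / u ^ 10) hO (by
      have e : ∀ x : V k ℤ, ∏ ω : Fin k → Bool, (cramer w (L ω x) - cramer z (L ω x))
          = F (fun i : PI n => i.1) (Finset.univ.filter fun i : PI n => ((i.1 : ℕ) : ℝ) < w)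
            (Finset.univ.filter fun i : PI n => ((i.1 : ℕ) : ℝ) < z)
            (red (fun i : PI n => i.1) x) := by
        intro x
        unfold F phi
        refine Finset.prod_congr rfl fun ω _ => ?_
        rw [cramer_lam n w (hfl w hwQ) _ (s (fun i : PI n => i.1) ω (red (fun i : PI n => i.1) x))
          (fun i => mem_s_red _ _ _ _),
          cramer_lam n z (hfl z hzQ) _ (s (fun i : PI n => i.1) ω (red (fun i : PI n => i.1) x))
          (fun i => mem_s_red _ _ _ _)]
      simp only [e]
      refine hcore.trans ?_
      rw [mul_add]
      exact add_le_add le_rfl hr)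
  have hfun : (fun a : ℤ => ((cramer w a : ℝ) : ℂ) - ((cramer z a : ℝ) : ℂ))
      = fun a => (((fun a => cramer w a - cramer z a) a : ℝ) : ℂ) := by
    funext a; push_cast; rfl
  rw [hfun]
  refine hE.trans ?_
  rw [hu10]
  have hmp : 0 < m := by linarith
  generalize (1 : ℝ) / 2 ^ k = c at hc0 hc1 ⊢
  have a1 : (C1 / m + C / Real.log N) ^ c ≤ (C1 / m) ^ c + (C / Real.log N) ^ c :=
    Real.rpow_add_le_add_rpow (by positivity) (by positivity) hc0.le hc1
  have a2 : (C1 / m) ^ c = C1 ^ c * m ^ (-c) := by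
    rw [Real.div_rpow hC1p.le hmp.le, Real.rpow_neg hmp.le]; rfl
  have a3 : (C / Real.log N) ^ c = C ^ c * Real.log N ^ (-c) := by
    rw [Real.div_rpow hC.le hlog0.le, Real.rpow_neg hlog0.le]; rfl
  have w0 : 0 ≤ w ^ (-c) := by positivity
  have z0 : 0 ≤ z ^ (-c) := by positivity
  have l0 : 0 ≤ Real.log N ^ (-c) := by positivity
  have a4 : m ^ (-c) ≤ w ^ (-c) + z ^ (-c) := by
    rcases min_choice w z with h | h
    · rw [hm, h]; linarith
    · rw [hm, h]; linarith
  have p1 : 0 ≤ C1 ^ c := by positivity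
  have p2 : 0 ≤ C ^ c := by positivity
  rw [a2, a3] at a1
  have b1 := mul_le_mul_of_nonneg_left a4 p1
  nlinarith [mul_nonneg p1 l0, mul_nonneg p2 w0, mul_nonneg p2 z0]

end CG

theorem cramer_model_gowers_stability (k : ℕ) (hk : 1 ≤ k) :
    ∃ c C : ℝ, 0 < c ∧ 0 < C ∧ ∃ N₀ : ℝ, ∀ N : ℝ, N₀ ≤ N →
      ∀ w z : ℝ, 2 ≤ w → w ≤ Qparam N → 2 ≤ z → z ≤ Qparam N →
        gowersUN k N (fun n => ((cramer w n : ℝ) : ℂ) - ((cramer z n : ℝ) : ℂ))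
          ≤ C * (Real.log N ^ (-c) + w ^ (-c) + z ^ (-c)) := by
  exact CG.final k
end

section
/- For every integer k ≥ 1 and every ε > 0 there is a constant C = C(k, ε) > 0 such that for every primitive real (quadratic) Dirichlet character χ of conductor q ≥ 1 one has ‖χ‖_{U^k(ℤ/qℤ)} ≤ C·q^{−1/2^{k+1} + ε}, where χ is viewed as a function on ℤ/qℤ. -/
open scoped Classical

noncomputable section

/-- The normalized Gowers norm `‖f‖_{U^k(G)}` of a function on a finite additive group `G`. -/
def gowersUAvg {G : Type*} [AddCommGroup G] (k : ℕ) (f : G → ℂ) : ℝ :=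
  ((∑' nh : G × (Fin k → G), gowersProd k f nh.1 nh.2).re / (Nat.card G : ℝ) ^ (k + 1)) ^
    ((1 : ℝ) / 2 ^ k)

end

open Polynomial

noncomputable section Stepanov

variable {p : ℕ} [Fact p.Prime]

lemma stp_iter_ne {F : Type*} [Field F] [CharP F p] (f : F[X]) (x : F) (hf : f.eval x ≠ 0) (m : ℕ) (hm : m < p) :
    ∀ u : F[X], u.eval x ≠ 0 →
      ((fun r : F[X] => f * derivative r)^[m] ((X - C x) ^ m * u)).eval x ≠ 0 := by
  induction m with
  | zero => intro u hu; simpa using hu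
  | succ m ih =>
    intro u hu
    rw [Function.iterate_succ_apply]
    have e : f * derivative ((X - C x) ^ (m + 1) * u) =
        (X - C x) ^ m * (f * (((m + 1 : ℕ) : F[X]) * u + (X - C x) * derivative u)) := by
      rw [derivative_mul, derivative_X_sub_C_pow, ← C_eq_natCast]
      push_cast
      ring
    rw [e]
    apply ih (by omega)
    have h1 : ((m + 1 : ℕ) : F) ≠ 0 := by
      intro h
      rw [CharP.cast_eq_zero_iff F p] at h
      exact absurd (Nat.le_of_dvd (by omega) h) (by omega)
    simp only [eval_mul, eval_add, eval_natCast, eval_sub, eval_X, eval_C, sub_self, zero_mul, add_zero]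
    exact mul_ne_zero hf (mul_ne_zero h1 hu)

lemma stp_dvd (f : (ZMod p)[X]) (x : ZMod p) (hf : f.eval x ≠ 0) (R : (ZMod p)[X]) (hR : R ≠ 0)
    (l : ℕ) (hl : l ≤ p)
    (h : ∀ k < l, ((fun r : (ZMod p)[X] => f * derivative r)^[k] R).eval x = 0) :
    (X - C x) ^ l ∣ R := by
  by_contra hc
  obtain ⟨u, hu, hu2⟩ := exists_eq_pow_rootMultiplicity_mul_and_not_dvd R hR x
  have hlt : rootMultiplicity x R < l := by
    by_contra hge
    push Not at hge
    exact hc ((pow_dvd_pow _ hge).trans (pow_rootMultiplicity_dvd R x))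
  have := h _ hlt
  rw [dvd_iff_isRoot] at hu2
  have h3 := stp_iter_ne (p := p) f x hf (rootMultiplicity x R) (by omega) u hu2
  rw [← hu] at h3
  exact h3 this

lemma stp_nonvanish (hp2 : p ≠ 2) (f : (ZMod p)[X]) (hodd : Odd f.natDegree) (h0 : f.coeff 0 ≠ 0) (n : ℕ)
    (hn : 2 * n + f.natDegree ≤ p) (J : ℕ) :
    ∀ r s : ℕ → (ZMod p)[X], (∀ j, (r j).natDegree < n) → (∀ j, (s j).natDegree < n) →
    ∑ j ∈ Finset.range J, (r j + s j * f ^ ((p - 1) / 2)) * X ^ (p * j) = 0 →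
    ∀ j < J, r j = 0 ∧ s j = 0 := by
  induction J with
  | zero => intro r s _ _ _ j hj; omega
  | succ J ih =>
    intro r s hr hs h
    have hpodd : p % 2 = 1 := (Fact.out : p.Prime).eq_two_or_odd.resolve_left hp2
    set g := f ^ ((p - 1) / 2) with hg
    rw [Finset.sum_range_succ'] at h
    have e : ∑ k ∈ Finset.range J, (r (k + 1) + s (k + 1) * g) * X ^ (p * (k + 1)) =
        X ^ p * ∑ k ∈ Finset.range J, (r (k + 1) + s (k + 1) * g) * X ^ (p * k) := by
      rw [Finset.mul_sum]
      refine Finset.sum_congr rfl fun k _ => ?_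
      ring
    rw [e] at h
    simp only [mul_zero, pow_zero, mul_one] at h
    have hd : X ^ p ∣ r 0 + s 0 * g := by
      refine ⟨-∑ k ∈ Finset.range J, (r (k + 1) + s (k + 1) * g) * X ^ (p * k), ?_⟩
      linear_combination h
    have hgf : g ^ 2 * f = f ^ p := by
      rw [hg, ← pow_mul, ← pow_succ]
      congr 1
      omega
    have hX : (X : (ZMod p)[X]) ^ p ∣ f ^ p - C (f.coeff 0) := by
      rw [← ZMod.expand_card f]
      have h1 : X ∣ f - C (f.coeff 0) := by
        rw [X_dvd_iff]; simp
      have := map_dvd (expand (ZMod p) p) h1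
      rwa [map_sub, expand_X, expand_C] at this
    have hD : X ^ p ∣ f * r 0 ^ 2 - C (f.coeff 0) * s 0 ^ 2 := by
      have : f * r 0 ^ 2 - C (f.coeff 0) * s 0 ^ 2 =
        (r 0 + s 0 * g) * (f * (r 0 - s 0 * g)) + (f ^ p - C (f.coeff 0)) * s 0 ^ 2 := by
        rw [← hgf]; ring
      rw [this]
      exact dvd_add (hd.mul_right _) (hX.mul_right _)
    have hr0 := hr 0
    have hs0 := hs 0
    have hz : f * r 0 ^ 2 - C (f.coeff 0) * s 0 ^ 2 = 0 := by
      by_contra hne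
      have h1 := natDegree_le_of_dvd hD hne
      rw [natDegree_X_pow] at h1
      have h2 : (f * r 0 ^ 2).natDegree ≤ f.natDegree + 2 * (r 0).natDegree :=
        natDegree_mul_le.trans (by gcongr; exact natDegree_pow_le)
      have h3 : (C (f.coeff 0) * s 0 ^ 2).natDegree ≤ 2 * (s 0).natDegree :=
        (natDegree_C_mul_le _ _).trans natDegree_pow_le
      have h4 := natDegree_sub_le (f * r 0 ^ 2) (C (f.coeff 0) * s 0 ^ 2)
      have h5 := max_le_iff.mpr ⟨h2.trans (show _ ≤ p - 1 by omega), h3.trans (show _ ≤ p - 1 by omega)⟩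
      have := (Fact.out : p.Prime).one_lt
      omega
    have hf0 : f ≠ 0 := by rintro rfl; simp at h0
    have hr00 : r 0 = 0 := by
      by_contra hrne
      have heq : f * r 0 ^ 2 = C (f.coeff 0) * s 0 ^ 2 := sub_eq_zero.mp hz
      have := congrArg natDegree heq
      rw [natDegree_C_mul h0, natDegree_mul hf0 (pow_ne_zero _ hrne), natDegree_pow, natDegree_pow] at this
      obtain ⟨t, ht⟩ := hodd
      omega
    have hs00 : s 0 = 0 := by
      rw [hr00] at hz
      by_contra hsne
      have : C (f.coeff 0) * s 0 ^ 2 ≠ 0 := mul_ne_zero (by simpa using h0) (pow_ne_zero _ hsne)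
      apply this
      linear_combination -hz
    rw [hr00, hs00] at h
    simp only [zero_mul, add_zero] at h
    have h' := (mul_eq_zero.mp h).resolve_left (pow_ne_zero _ X_ne_zero)
    intro j hj
    rcases j with _ | j
    · exact ⟨hr00, hs00⟩
    · exact ih (fun k => r (k + 1)) (fun k => s (k + 1)) (fun k => hr _) (fun k => hs _) h' j (by omega)

/-- first operator -/
def stpT0 (f : (ZMod p)[X]) : (ZMod p)[X] →ₗ[ZMod p] (ZMod p)[X] :=
  (LinearMap.mulLeft (ZMod p) f) ∘ₗ derivative

/-- second operator -/
def stpT1 (f : (ZMod p)[X]) : (ZMod p)[X] →ₗ[ZMod p] (ZMod p)[X] :=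
  stpT0 f + LinearMap.mulLeft (ZMod p) (((p - 1) / 2 : ℕ) * derivative f)

lemma stpT0_apply (f r : (ZMod p)[X]) : stpT0 f r = f * derivative r := rfl
lemma stpT1_apply (f r : (ZMod p)[X]) :
    stpT1 f r = f * derivative r + ((p - 1) / 2 : ℕ) * derivative f * r := rfl

lemma stpT0_deg (f r : (ZMod p)[X]) : (stpT0 f r).natDegree ≤ r.natDegree + f.natDegree := by
  rw [stpT0_apply]
  have h1 := natDegree_derivative_le r
  have := natDegree_mul_le (p := f) (q := derivative r)
  omega

lemma stpT1_deg (f r : (ZMod p)[X]) : (stpT1 f r).natDegree ≤ r.natDegree + f.natDegree := by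
  rw [stpT1_apply]
  have h1 := natDegree_derivative_le r
  have h2 := natDegree_derivative_le f
  have h3 := natDegree_mul_le (p := f) (q := derivative r)
  have h4 : ((((p - 1) / 2 : ℕ) : (ZMod p)[X]) * derivative f * r).natDegree ≤ f.natDegree + r.natDegree := by
    refine natDegree_mul_le.trans ?_
    have : ((((p - 1) / 2 : ℕ) : (ZMod p)[X]) * derivative f).natDegree ≤ f.natDegree := by
      refine natDegree_mul_le.trans ?_
      rw [natDegree_natCast]; omega
    omega
  exact (natDegree_add_le _ _).trans (max_le (by omega) (by omega))

lemma stp_iter_deg (T : (ZMod p)[X] →ₗ[ZMod p] (ZMod p)[X]) (d : ℕ)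
    (hT : ∀ r, (T r).natDegree ≤ r.natDegree + d) (k : ℕ) (r) :
    ((T ^ k) r).natDegree ≤ r.natDegree + k * d := by
  induction k with
  | zero => simp
  | succ k ih =>
    rw [pow_succ', Module.End.mul_apply]
    have := hT ((T ^ k) r)
    nlinarith

lemma stp_iter_sum (hp2 : p ≠ 2) (f : (ZMod p)[X]) (J : ℕ) (k : ℕ) : ∀ (r s : ℕ → (ZMod p)[X]),
    (fun r : (ZMod p)[X] => f * derivative r)^[k]
      (∑ j ∈ Finset.range J, (r j + s j * f ^ ((p - 1) / 2)) * X ^ (p * j)) =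
    ∑ j ∈ Finset.range J, ((stpT0 f ^ k) (r j) + (stpT1 f ^ k) (s j) * f ^ ((p - 1) / 2)) * X ^ (p * j) := by
  induction k with
  | zero => intro r s; simp
  | succ k ih =>
    intro r s
    rw [Function.iterate_succ_apply]
    have e : f * derivative (∑ j ∈ Finset.range J, (r j + s j * f ^ ((p - 1) / 2)) * X ^ (p * j)) =
      ∑ j ∈ Finset.range J, (stpT0 f (r j) + stpT1 f (s j) * f ^ ((p - 1) / 2)) * X ^ (p * j) := by
      rw [derivative_sum, Finset.mul_sum]
      refine Finset.sum_congr rfl fun j _ => ?_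
      have hpp := (Fact.out : p.Prime).two_le
      have hpodd : p % 2 = 1 := (Fact.out : p.Prime).eq_two_or_odd.resolve_left hp2
      obtain ⟨c, hc⟩ : ∃ c, (p - 1) / 2 = c + 1 := ⟨(p-1)/2 - 1, by omega⟩
      rw [stpT0_apply, stpT1_apply, hc]
      have hX : derivative ((X : (ZMod p)[X]) ^ (p * j)) = 0 := by
        rw [derivative_X_pow]; simp
      rw [derivative_mul, hX, derivative_add, derivative_mul, derivative_pow_succ]
      simp only [mul_zero, add_zero, map_add, map_natCast, map_one]
      push_cast
      ring
    rw [e, ih]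
    simp only [pow_succ, Module.End.mul_apply]

lemma stp_exists (f : (ZMod p)[X]) (a : ZMod p) (n J l : ℕ) (hn : 1 ≤ n)
    (hc : l * (n + l * f.natDegree + J) < 2 * J * n) :
    ∃ r s : ℕ → (ZMod p)[X], (∀ j, (r j).natDegree < n) ∧ (∀ j, (s j).natDegree < n) ∧
      (∃ j < J, ¬ (r j = 0 ∧ s j = 0)) ∧
      ∀ k < l, ∑ j ∈ Finset.range J, ((stpT0 f ^ k) (r j) + a • (stpT1 f ^ k) (s j)) * X ^ j = 0 := by
  set M := n + l * f.natDegree + J with hM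
  let V := (Fin J → degreeLT (ZMod p) n) × (Fin J → degreeLT (ZMod p) n)
  let L : ℕ → V →ₗ[ZMod p] (ZMod p)[X] := fun k => ∑ j : Fin J,
    (LinearMap.mulRight (ZMod p) (X ^ (j : ℕ))) ∘ₗ
      ((stpT0 f ^ k) ∘ₗ (degreeLT (ZMod p) n).subtype ∘ₗ LinearMap.proj j ∘ₗ LinearMap.fst _ _ _ +
        a • ((stpT1 f ^ k) ∘ₗ (degreeLT (ZMod p) n).subtype ∘ₗ LinearMap.proj j ∘ₗ LinearMap.snd _ _ _))
  have hL : ∀ k v, L k v = ∑ j : Fin J, ((stpT0 f ^ k) (v.1 j : (ZMod p)[X]) +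
      a • (stpT1 f ^ k) (v.2 j : (ZMod p)[X])) * X ^ (j : ℕ) := by
    intro k v
    simp [L]
    rfl
  let Φ : V →ₗ[ZMod p] (Fin l → Fin M → ZMod p) :=
    LinearMap.pi fun k => LinearMap.pi fun i => (lcoeff (ZMod p) (i : ℕ)) ∘ₗ L k
  have hfr : Module.finrank (ZMod p) (degreeLT (ZMod p) n) = n := by
    rw [(degreeLTEquiv (ZMod p) n).finrank_eq]; simp
  have : Module.Finite (ZMod p) (degreeLT (ZMod p) n) := Module.Finite.equiv (degreeLTEquiv (ZMod p) n).symm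
  have hker : LinearMap.ker Φ ≠ ⊥ := by
    apply LinearMap.ker_ne_bot_of_finrank_lt
    simp only [V, Module.finrank_prod, Module.finrank_pi_fintype, hfr]
    simp
    nlinarith
  obtain ⟨v, hv, hv0⟩ := (Submodule.ne_bot_iff _).mp hker
  have hdeg : ∀ q : degreeLT (ZMod p) n, (q : (ZMod p)[X]).natDegree < n := by
    intro q
    have := mem_degreeLT.mp q.2
    by_cases h : (q : (ZMod p)[X]) = 0
    · rw [h]; simp; omega
    · exact (natDegree_lt_iff_degree_lt h).mpr this
  refine ⟨fun j => if h : j < J then (v.1 ⟨j, h⟩ : (ZMod p)[X]) else 0,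
    fun j => if h : j < J then (v.2 ⟨j, h⟩ : (ZMod p)[X]) else 0, ?_, ?_, ?_, ?_⟩
  · intro j
    beta_reduce
    split_ifs
    · exact hdeg _
    · simp; omega
  · intro j
    beta_reduce
    split_ifs
    · exact hdeg _
    · simp; omega
  · by_contra hcon
    push Not at hcon
    apply hv0
    have : ∀ j : Fin J, v.1 j = 0 ∧ v.2 j = 0 := by
      intro j
      have := hcon j j.2
      simpa using this
    exact Prod.ext (funext fun j => (this j).1) (funext fun j => (this j).2)
  · intro k hk
    have e1 : ∑ j ∈ Finset.range J, ((stpT0 f ^ k) (if h : j < J then (v.1 ⟨j, h⟩ : (ZMod p)[X]) else 0)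
      + a • (stpT1 f ^ k) (if h : j < J then (v.2 ⟨j, h⟩ : (ZMod p)[X]) else 0)) * X ^ j = L k v := by
      rw [hL, Finset.sum_range]
      simp
    rw [e1]
    have hdegL : (L k v).natDegree < M := by
      rw [hL]
      refine lt_of_le_of_lt (natDegree_sum_le_of_forall_le (n := M - 1) _ _ ?_) (by omega)
      intro j _
      refine natDegree_mul_le.trans ?_
      rw [natDegree_X_pow]
      have h1 := stp_iter_deg (stpT0 f) f.natDegree (stpT0_deg f) k (v.1 j)
      have h2 := stp_iter_deg (stpT1 f) f.natDegree (stpT1_deg f) k (v.2 j)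
      have h3 := (natDegree_smul_le a ((stpT1 f ^ k) (v.2 j : (ZMod p)[X])))
      have h4 := hdeg (v.1 j)
      have h5 := hdeg (v.2 j)
      have h6 : k * f.natDegree ≤ l * f.natDegree := Nat.mul_le_mul_right _ hk.le
      have h7 := natDegree_add_le ((stpT0 f ^ k) (v.1 j : (ZMod p)[X])) (a • (stpT1 f ^ k) (v.2 j : (ZMod p)[X]))
      have h8 := j.2
      have h9 := max_le_iff.mpr ⟨h1.trans (show _ ≤ n - 1 + l * f.natDegree by omega),
        (h3.trans h2).trans (show _ ≤ n - 1 + l * f.natDegree by omega)⟩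
      omega
    ext i
    by_cases hi : i < M
    · have h1 : Φ v = 0 := hv
      have := congrFun (congrFun h1 ⟨k, hk⟩) ⟨i, hi⟩
      simpa [Φ] using this
    · rw [coeff_eq_zero_of_natDegree_lt (by omega)]; simp

lemma stp_count (hp2 : p ≠ 2) (f : (ZMod p)[X]) (hodd : Odd f.natDegree) (h0 : f.coeff 0 ≠ 0) (a : ZMod p)
    (n J l : ℕ) (hn : 1 ≤ n) (hl : l ≤ p) (hn2 : 2 * n + f.natDegree ≤ p)
    (hc : l * (n + l * f.natDegree + J) < 2 * J * n) (S : Finset (ZMod p))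
    (hS : ∀ x ∈ S, f.eval x ≠ 0 ∧ (f.eval x) ^ ((p - 1) / 2) = a) :
    l * S.card ≤ n + (p - 1) / 2 * f.natDegree + p * J := by
  obtain ⟨r, s, hr, hs, ⟨j0, hj0, hne⟩, hk⟩ := stp_exists f a n J l hn hc
  set R := ∑ j ∈ Finset.range J, (r j + s j * f ^ ((p - 1) / 2)) * X ^ (p * j) with hRdef
  have hR : R ≠ 0 := fun h => hne (stp_nonvanish hp2 f hodd h0 n hn2 J r s hr hs h j0 hj0)
  have hdvd : ∀ x ∈ S, (X - C x) ^ l ∣ R := by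
    intro x hx
    apply stp_dvd f x (hS x hx).1 R hR l hl
    intro k hkl
    rw [hRdef, stp_iter_sum hp2]
    have := congrArg (eval x) (hk k hkl)
    rw [eval_finsetSum] at this ⊢
    rw [eval_zero] at this
    rw [← this]
    refine Finset.sum_congr rfl fun j _ => ?_
    simp only [eval_mul, eval_add, eval_pow, eval_X, eval_smul, smul_eq_mul, (hS x hx).2]
    rw [pow_mul, ZMod.pow_card]
    ring
  have hprod : ∏ x ∈ S, (X - C x) ^ l ∣ R := by
    apply Finset.prod_dvd_of_coprime
    · intro x _ y _ hxy
      exact (isCoprime_X_sub_C_of_isUnit_sub (sub_ne_zero.mpr hxy).isUnit).pow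
    · exact hdvd
  have h1 := natDegree_le_of_dvd hprod hR
  rw [natDegree_prod _ _ (fun x _ => pow_ne_zero _ (X_sub_C_ne_zero x))] at h1
  simp only [natDegree_pow, natDegree_X_sub_C, mul_one, Finset.sum_const, smul_eq_mul] at h1
  have h2 : R.natDegree ≤ n + (p - 1) / 2 * f.natDegree + p * J := by
    refine natDegree_sum_le_of_forall_le _ _ ?_
    intro j hj
    have hj' := Finset.mem_range.mp hj
    refine natDegree_mul_le.trans ?_
    rw [natDegree_X_pow]
    have h3 : p * j ≤ p * J := Nat.mul_le_mul_left _ hj'.le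
    have h4 : (r j + s j * f ^ ((p - 1) / 2)).natDegree ≤ n + (p - 1) / 2 * f.natDegree := by
      refine (natDegree_add_le _ _).trans (max_le ?_ ?_)
      · have := hr j; omega
      · refine natDegree_mul_le.trans ?_
        have := hs j
        have := natDegree_pow_le (p := f) (n := (p - 1) / 2)
        omega
    omega
  rw [mul_comm]; omega

lemma stp_count2 (hp2 : p ≠ 2) (f : (ZMod p)[X]) (hodd : Odd f.natDegree) (h0 : f.coeff 0 ≠ 0) (a : ZMod p)
    (hbig : 400 + 8 * f.natDegree ≤ p) (S : Finset (ZMod p))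
    (hS : ∀ x ∈ S, f.eval x ≠ 0 ∧ (f.eval x) ^ ((p - 1) / 2) = a) :
    (S.card : ℝ) ≤ p / 2 + 9 * f.natDegree * √p := by
  have hpodd : p % 2 = 1 := (Fact.out : p.Prime).eq_two_or_odd.resolve_left hp2
  set d := f.natDegree with hd
  obtain ⟨d', hd'⟩ := hodd
  set t := Nat.sqrt p with ht
  have ht1 : t * t ≤ p := Nat.sqrt_le p
  have ht2 : p < (t + 1) * (t + 1) := Nat.lt_succ_sqrt p
  have ht20 : 20 ≤ t := by
    rw [ht, Nat.le_sqrt]; omega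
  obtain ⟨n, hn⟩ : ∃ n, p = 2 * n + d := ⟨(p - d) / 2, by omega⟩
  have key := stp_count hp2 f ⟨d', hd'⟩ h0 a n (t + 8 * d) (2 * t) (by omega) (by nlinarith) (by omega)
    (by
      rw [← hd]
      have h1 : d * (t * t) ≤ d * p := Nat.mul_le_mul_left _ ht1
      have h2 : t * t ≤ d * p := by nlinarith
      have h3 : 20 * t ≤ p := by nlinarith
      have h4 : d * (4 * d + 8 * t) < d * p := by
        apply Nat.mul_lt_mul_of_pos_left <;> omega
      have h5 : d * p = 2 * (d * n) + d * d := by rw [hn]; ring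
      nlinarith) S hS
  rw [← hd] at key
  have key2 : 4 * t * S.card ≤ 2 * p * t + 18 * d * p := by
    have h6 : 2 * ((p - 1) / 2 * d) ≤ p * d := by
      rw [← mul_assoc]; apply Nat.mul_le_mul_right; omega
    have h7 : 1 * p ≤ d * p := Nat.mul_le_mul_right _ (by omega)
    nlinarith
  have key3 : (4 : ℝ) * t * S.card ≤ 2 * p * t + 18 * d * p := by exact_mod_cast key2
  have hsq : √(p : ℝ) * √p = p := Real.mul_self_sqrt (by positivity)
  have htr : √(p : ℝ) ≤ 2 * t := by
    rw [Real.sqrt_le_left (by positivity)]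
    have : p ≤ (2 * t) ^ 2 := by nlinarith
    exact_mod_cast this
  have htpos : (0 : ℝ) < t := by exact_mod_cast (by omega : 0 < t)
  have h8 : (p : ℝ) ≤ 2 * t * √p := by
    calc (p : ℝ) = √p * √p := hsq.symm
      _ ≤ _ := by gcongr
  have h9 : (18 : ℝ) * d * p ≤ 18 * d * (2 * t * √p) := by gcongr
  have : (4 * t : ℝ) * S.card ≤ (4 * t) * (p / 2 + 9 * d * √p) := by nlinarith
  exact le_of_mul_le_mul_left this (by positivity)

lemma stp_charsum (hp2 : p ≠ 2) (f : (ZMod p)[X]) (hodd : Odd f.natDegree) (h0 : f.coeff 0 ≠ 0)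
    (hbig : 400 + 8 * f.natDegree ≤ p) :
    |((∑ x : ZMod p, quadraticChar (ZMod p) (f.eval x) : ℤ) : ℝ)| ≤ 19 * f.natDegree * √p := by
  have hpodd : p % 2 = 1 := (Fact.out : p.Prime).eq_two_or_odd.resolve_left hp2
  have hchar : ringChar (ZMod p) ≠ 2 := by rwa [ZMod.ringChar_zmod_n]
  let N : ℤ → Finset (ZMod p) := fun a => Finset.univ.filter fun x => quadraticChar (ZMod p) (f.eval x) = a
  have hN : ∀ a : ℤ, a ≠ 0 → ((N a).card : ℝ) ≤ p / 2 + 9 * f.natDegree * √p := by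
    intro a ha
    apply stp_count2 hp2 f hodd h0 (a : ZMod p) hbig
    intro x hx
    have hx := (Finset.mem_filter.mp hx).2
    constructor
    · intro h; rw [h] at hx; simp at hx; exact ha hx.symm
    · have := quadraticChar_eq_pow_of_char_ne_two' hchar (f.eval x)
      rw [hx, ZMod.card] at this
      rw [this]; congr 1; omega
  have hf0 : f ≠ 0 := by rintro rfl; simp at h0
  have hN0 : (N 0).card ≤ f.natDegree := by
    have : N 0 ⊆ f.roots.toFinset := by
      intro x hx
      have hx := (Finset.mem_filter.mp hx).2
      rw [quadraticChar_eq_zero_iff] at hx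
      simp [hf0, hx]
    exact (Finset.card_le_card this).trans ((Multiset.toFinset_card_le _).trans (card_roots' f))
  have htri : ∀ x : ZMod p, quadraticChar (ZMod p) (f.eval x) = 0 ∨ quadraticChar (ZMod p) (f.eval x) = 1 ∨
      quadraticChar (ZMod p) (f.eval x) = -1 := fun x => quadraticChar_isQuadratic _ _
  have hsum : ∑ x : ZMod p, quadraticChar (ZMod p) (f.eval x) = (N 1).card - (N (-1)).card := by
    simp only [N, Finset.card_filter]
    push_cast
    rw [← Finset.sum_sub_distrib]
    refine Finset.sum_congr rfl fun x _ => ?_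
    rcases htri x with h | h | h <;> simp [h]
  have htot : (p : ℤ) = (N 0).card + (N 1).card + (N (-1)).card := by
    have : (p : ℤ) = ∑ x : ZMod p, 1 := by simp
    rw [this]
    simp only [N, Finset.card_filter]
    push_cast
    rw [← Finset.sum_add_distrib, ← Finset.sum_add_distrib]
    refine Finset.sum_congr rfl fun x _ => ?_
    rcases htri x with h | h | h <;> simp [h]
  have htot' : (p : ℝ) = (N 0).card + (N 1).card + (N (-1)).card := by exact_mod_cast htot
  have h1 := hN 1 (by norm_num)
  have h2 := hN (-1) (by norm_num)
  have h3 : ((N 0).card : ℝ) ≤ f.natDegree := by exact_mod_cast hN0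
  have h4 : (1 : ℝ) ≤ √p := by
    rw [Real.one_le_sqrt]; exact_mod_cast (Fact.out : p.Prime).one_lt.le
  have h5 : (f.natDegree : ℝ) * 1 ≤ f.natDegree * √p := by gcongr
  rw [hsum]
  push_cast
  rw [abs_le]
  constructor <;> nlinarith

end Stepanov

section PrimeBound

variable {p : ℕ} [Fact p.Prime]

/-- the linear form attached to a vertex -/
def gowL {G : Type*} [AddCommGroup G] {k : ℕ} (ω : Fin k → Bool) (h : Fin k → G) : G :=
  ∑ i, if ω i then h i else 0

lemma gowL_false {G : Type*} [AddCommGroup G] {k : ℕ} (h : Fin k → G) :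
    gowL (fun _ => false) h = 0 := by simp [gowL]

lemma gow_bad_card {k : ℕ} (ω : Fin k → Bool) (hω : ω ≠ fun _ => false) :
    (Finset.univ.filter fun h : Fin k → ZMod p => gowL ω h = 0).card * p ≤ p ^ k := by
  obtain ⟨i, hi⟩ : ∃ i, ω i = true := by
    by_contra hc
    push Not at hc
    exact hω (funext fun i => by simpa using hc i)
  have hadd : ∀ (h : Fin k → ZMod p) (t : ZMod p), gowL ω (h + Pi.single i t) = gowL ω h + t := by
    intro h t
    have h1 : gowL ω (h + Pi.single i t) = gowL ω h + gowL ω (Pi.single i t) := by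
      simp only [gowL, ← Finset.sum_add_distrib]
      refine Finset.sum_congr rfl fun j _ => ?_
      split_ifs <;> simp
    rw [h1]
    congr 1
    simp only [gowL]
    rw [Finset.sum_eq_single i]
    · simp [hi]
    · intro j _ hj
      simp [hj]
    · simp
  have := Finset.card_le_card_of_injOn
    (s := (Finset.univ.filter fun h : Fin k → ZMod p => gowL ω h = 0) ×ˢ (Finset.univ : Finset (ZMod p)))
    (t := (Finset.univ : Finset (Fin k → ZMod p))) (fun x => x.1 + Pi.single i x.2)
    (by intro x _; simp) (by
      rintro ⟨h, t⟩ hx ⟨h', t'⟩ hx' heq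
      simp only [Finset.coe_product, Finset.coe_filter, Finset.mem_univ, true_and, Finset.coe_univ,
        Set.mem_prod, Set.mem_ofPred_eq, Set.mem_univ, and_true] at hx hx'
      beta_reduce at heq
      simp only at heq
      have := congrArg (gowL ω) heq
      rw [hadd, hadd, hx, hx', zero_add, zero_add] at this
      subst this
      simpa using heq)
  simpa [Finset.card_product, ZMod.card] using this

/-- the polynomial attached to a tuple -/
noncomputable def gowPoly {k : ℕ} (h : Fin k → ZMod p) : (ZMod p)[X] :=
  ∏ ω ∈ Finset.univ.erase (fun _ : Fin k => false), (C (gowL ω h) * X + 1)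

lemma gowPoly_natDegree {k : ℕ} (h : Fin k → ZMod p)
    (hgood : ∀ ω : Fin k → Bool, ω ≠ (fun _ => false) → gowL ω h ≠ 0) :
    (gowPoly h).natDegree = 2 ^ k - 1 := by
  have hd : ∀ ω ∈ Finset.univ.erase (fun _ : Fin k => false), (C (gowL ω h) * X + 1 : (ZMod p)[X]).natDegree = 1 := by
    intro ω hω
    rw [← C_1]
    exact natDegree_linear (hgood ω (Finset.ne_of_mem_erase hω))
  rw [gowPoly, natDegree_prod]
  · rw [Finset.sum_congr rfl hd]
    simp [Finset.card_erase_of_mem]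
  · intro ω hω h0
    have := hd ω hω
    rw [h0] at this
    simp at this

lemma gow_inner (k : ℕ) (hk : 1 ≤ k) (h : Fin k → ZMod p) :
    ∑ n : ZMod p, ∏ ω : Fin k → Bool, quadraticChar (ZMod p) (n + gowL ω h) =
    ∑ m : ZMod p, quadraticChar (ZMod p) ((gowPoly h).eval m) - 1 := by
  have h1 : ∑ n : ZMod p, ∏ ω : Fin k → Bool, quadraticChar (ZMod p) (n + gowL ω h) =
    ∑ m : ZMod p, ∏ ω : Fin k → Bool, quadraticChar (ZMod p) (m⁻¹ + gowL ω h) :=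
    (Equiv.sum_comp (Equiv.inv (ZMod p)) (fun n => ∏ ω : Fin k → Bool, quadraticChar (ZMod p) (n + gowL ω h))).symm
  rw [h1]
  have h2 : (1 : ℤ) = ∑ m : ZMod p, if m = 0 then 1 else 0 := by simp
  rw [h2, ← Finset.sum_sub_distrib]
  refine Finset.sum_congr rfl fun m _ => ?_
  by_cases hm : m = 0
  · subst hm
    simp only [if_true]
    rw [Finset.prod_eq_zero (Finset.mem_univ (fun _ => false))]
    · simp [gowPoly, eval_prod]
    · simp [gowL_false]
  · simp only [hm, if_false, sub_zero]
    have h3 : ∀ ω : Fin k → Bool, quadraticChar (ZMod p) (m⁻¹ + gowL ω h) =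
        quadraticChar (ZMod p) m⁻¹ * quadraticChar (ZMod p) (gowL ω h * m + 1) := by
      intro ω
      rw [← map_mul]
      congr 1
      field_simp
      ring
    simp only [h3]
    rw [Finset.prod_mul_distrib, Finset.prod_const]
    have h4 : quadraticChar (ZMod p) m⁻¹ ^ (Finset.univ : Finset (Fin k → Bool)).card = 1 := by
      have : (Finset.univ : Finset (Fin k → Bool)).card = 2 * 2 ^ (k - 1) := by
        rw [← pow_succ']
        simp [Nat.sub_add_cancel hk]
      rw [this, pow_mul, quadraticChar_sq_one (inv_ne_zero hm), one_pow]
    rw [h4, one_mul, gowPoly, eval_prod, map_prod,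
      ← Finset.mul_prod_erase _ _ (Finset.mem_univ (fun _ : Fin k => false))]
    simp [gowL_false]

lemma quadChar_abs_le (x : ZMod p) : |quadraticChar (ZMod p) x| ≤ 1 := by
  rcases quadraticChar_isQuadratic (ZMod p) x with h | h | h <;> simp [h]

lemma gow_inner_triv (k : ℕ) (h : Fin k → ZMod p) :
    |∑ n : ZMod p, ∏ ω : Fin k → Bool, quadraticChar (ZMod p) (n + gowL ω h)| ≤ p := by
  refine (Finset.abs_sum_le_sum_abs _ _).trans ?_
  have : ∀ n ∈ (Finset.univ : Finset (ZMod p)), |∏ ω : Fin k → Bool, quadraticChar (ZMod p) (n + gowL ω h)| ≤ 1 := by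
    intro n _
    rw [Finset.abs_prod]
    exact Finset.prod_le_one (fun _ _ => abs_nonneg _) (fun _ _ => quadChar_abs_le _)
  refine (Finset.sum_le_sum this).trans ?_
  simp

lemma gow_prime_bound (hp2 : p ≠ 2) (k : ℕ) (hk : 1 ≤ k) :
    √(p : ℝ) * |((∑ h : Fin k → ZMod p, ∑ n : ZMod p, ∏ ω : Fin k → Bool,
      quadraticChar (ZMod p) (n + gowL ω h) : ℤ) : ℝ)| ≤ (400 + 40 * 2 ^ k) * (p : ℝ) ^ (k + 1) := by
  have hp0 : (0 : ℝ) < p := by exact_mod_cast (Fact.out : p.Prime).pos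
  have hsq : √(p : ℝ) * √p = p := Real.mul_self_sqrt (by positivity)
  have h1p : (1 : ℝ) ≤ √p := by
    rw [Real.one_le_sqrt]; exact_mod_cast (Fact.out : p.Prime).one_lt.le
  have hcard : (Fintype.card (Fin k → ZMod p) : ℝ) = (p : ℝ) ^ k := by simp
  set F : (Fin k → ZMod p) → ℤ := fun h => ∑ n : ZMod p, ∏ ω : Fin k → Bool,
      quadraticChar (ZMod p) (n + gowL ω h) with hF
  have htriv : ∀ h, |(F h : ℝ)| ≤ p := by
    intro h
    have := gow_inner_triv (p := p) k h
    exact_mod_cast this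
  push_cast
  by_cases hbig : 400 + 8 * 2 ^ k ≤ p
  · let Bad : Finset (Fin k → ZMod p) := Finset.univ.filter fun h =>
      ∃ ω : Fin k → Bool, ω ≠ (fun _ => false) ∧ gowL ω h = 0
    have hBad : (Bad.card : ℝ) * p ≤ 2 ^ k * (p : ℝ) ^ k := by
      have hsub : Bad ⊆ (Finset.univ.erase (fun _ : Fin k => false)).biUnion
          fun ω => Finset.univ.filter fun h : Fin k → ZMod p => gowL ω h = 0 := by
        intro h hh
        obtain ⟨ω, h1, h2⟩ := (Finset.mem_filter.mp hh).2
        simp only [Finset.mem_biUnion, Finset.mem_filter, Finset.mem_univ, true_and]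
        exact ⟨ω, by simp [h1], h2⟩
      have h1 : Bad.card * p ≤ 2 ^ k * p ^ k := by
        calc Bad.card * p ≤ (∑ ω ∈ Finset.univ.erase (fun _ : Fin k => false),
              (Finset.univ.filter fun h : Fin k → ZMod p => gowL ω h = 0).card) * p :=
              Nat.mul_le_mul_right _ ((Finset.card_le_card hsub).trans Finset.card_biUnion_le)
          _ = ∑ ω ∈ Finset.univ.erase (fun _ : Fin k => false),
              (Finset.univ.filter fun h : Fin k → ZMod p => gowL ω h = 0).card * p := Finset.sum_mul _ _ _
          _ ≤ ∑ ω ∈ Finset.univ.erase (fun _ : Fin k => false), p ^ k :=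
              Finset.sum_le_sum fun ω hω => gow_bad_card ω (Finset.ne_of_mem_erase hω)
          _ ≤ 2 ^ k * p ^ k := by
              simp only [Finset.sum_const, smul_eq_mul]
              apply Nat.mul_le_mul_right
              simp [Finset.card_erase_of_mem]
      exact_mod_cast h1
    have hgood : ∀ h, h ∉ Bad → |(F h : ℝ)| ≤ 20 * 2 ^ k * √p := by
      intro h hh
      have hg : ∀ ω : Fin k → Bool, ω ≠ (fun _ => false) → gowL ω h ≠ 0 := by
        intro ω hω h0
        exact hh (Finset.mem_filter.mpr ⟨Finset.mem_univ _, ω, hω, h0⟩)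
      have hdeg := gowPoly_natDegree h hg
      have h2k : 2 ^ k = 2 * 2 ^ (k - 1) := by rw [← pow_succ', Nat.sub_add_cancel hk]
      have hpos : 0 < 2 ^ (k - 1) := by positivity
      have hodd : Odd (gowPoly h).natDegree := by
        rw [hdeg, Nat.odd_iff]; omega
      have h0 : (gowPoly h).coeff 0 ≠ 0 := by
        rw [coeff_zero_eq_eval_zero]; simp [gowPoly, eval_prod]
      have := stp_charsum hp2 (gowPoly h) hodd h0 (by omega)
      have hd2 : ((gowPoly h).natDegree : ℝ) ≤ 2 ^ k := by
        rw [hdeg]; exact_mod_cast Nat.sub_le _ _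
      rw [hF]
      beta_reduce
      rw [gow_inner k hk h]
      push_cast at this ⊢
      have h3 := abs_sub (∑ m : ZMod p, ((quadraticChar (ZMod p) ((gowPoly h).eval m) : ℤ) : ℝ)) 1
      have h4 : 19 * ((gowPoly h).natDegree : ℝ) * √p ≤ 19 * 2 ^ k * √p := by gcongr
      have h5 : (1 : ℝ) ≤ 2 ^ k := one_le_pow₀ (by norm_num)
      have h6 : 1 * 1 ≤ 2 ^ k * √(p : ℝ) := by gcongr
      rw [abs_one] at h3
      linarith
    have hsum : |∑ h, (F h : ℝ)| ≤ (p : ℝ) ^ k * (20 * 2 ^ k * √p) + 2 ^ k * (p : ℝ) ^ k := by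
      calc |∑ h, (F h : ℝ)| ≤ ∑ h, |(F h : ℝ)| := Finset.abs_sum_le_sum_abs _ _
        _ ≤ ∑ h, (20 * 2 ^ k * √p + if h ∈ Bad then (p : ℝ) else 0) := by
            refine Finset.sum_le_sum fun h _ => ?_
            split_ifs with hb
            · have := htriv h
              have : 0 ≤ 20 * 2 ^ k * √(p : ℝ) := by positivity
              linarith [htriv h]
            · simpa using hgood h hb
        _ = (p : ℝ) ^ k * (20 * 2 ^ k * √p) + Bad.card * p := by
            rw [Finset.sum_add_distrib, Finset.sum_const, Finset.card_univ, nsmul_eq_mul, hcard]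
            simp
        _ ≤ _ := by gcongr
    calc √(p : ℝ) * |∑ h, (F h : ℝ)| ≤ √p * ((p : ℝ) ^ k * (20 * 2 ^ k * √p) + 2 ^ k * (p : ℝ) ^ k * √p) := by
          gcongr
          refine hsum.trans ?_
          exact add_le_add le_rfl (le_mul_of_one_le_right (by positivity) h1p)
      _ = (21 * 2 ^ k) * (p : ℝ) ^ k * (√p * √p) := by ring
      _ = (21 * 2 ^ k) * (p : ℝ) ^ (k + 1) := by rw [hsq]; ring
      _ ≤ _ := by
          gcongr
          have : (0 : ℝ) < 2 ^ k := by positivity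
          linarith
  · push Not at hbig
    have hpb : (p : ℝ) ≤ 400 + 40 * 2 ^ k := by
      have h5 : (p : ℝ) < 400 + 8 * 2 ^ k := by exact_mod_cast hbig
      have : (0 : ℝ) < 2 ^ k := by positivity
      linarith
    have hs : |∑ h, (F h : ℝ)| ≤ (p : ℝ) ^ (k + 1) := by
      calc |∑ h, (F h : ℝ)| ≤ ∑ h, |(F h : ℝ)| := Finset.abs_sum_le_sum_abs _ _
        _ ≤ ∑ h : Fin k → ZMod p, (p : ℝ) := Finset.sum_le_sum fun h _ => htriv h
        _ = _ := by rw [Finset.sum_const, Finset.card_univ, nsmul_eq_mul, hcard]; ring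
    have : √(p : ℝ) ≤ p := by nlinarith
    gcongr
    linarith

end PrimeBound

section Assembly

/-- the Gowers sum without conjugations -/
noncomputable def gowSum {G : Type*} [AddCommGroup G] [Fintype G] (k : ℕ) (f : G → ℂ) : ℂ :=
  ∑ h : Fin k → G, ∑ n : G, ∏ ω : Fin k → Bool, f (n + gowL ω h)

lemma tsum_eq_gowSum {G : Type*} [AddCommGroup G] [Fintype G] (k : ℕ) (f : G → ℂ)
    (hf : ∀ x, (starRingEnd ℂ) (f x) = f x) :
    ∑' nh : G × (Fin k → G), gowersProd k f nh.1 nh.2 = gowSum k f := by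
  rw [tsum_fintype, Fintype.sum_prod_type_right]
  unfold gowSum gowersProd gowL
  refine Finset.sum_congr rfl fun h _ => Finset.sum_congr rfl fun n _ => Finset.prod_congr rfl fun ω _ => ?_
  exact Function.iterate_fixed (hf _) _

lemma gowSum_triv {G : Type*} [AddCommGroup G] [Fintype G] (k : ℕ) (f : G → ℂ) (hf : ∀ x, ‖f x‖ ≤ 1) :
    ‖gowSum k f‖ ≤ (Fintype.card G : ℝ) ^ (k + 1) := by
  unfold gowSum
  have h1 : ∀ h ∈ (Finset.univ : Finset (Fin k → G)),
      ‖∑ n : G, ∏ ω : Fin k → Bool, f (n + gowL ω h)‖ ≤ (Fintype.card G : ℝ) := by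
    intro h _
    refine (norm_sum_le _ _).trans ?_
    refine (Finset.sum_le_sum (g := fun _ => (1 : ℝ)) fun n _ => ?_).trans (by simp)
    rw [norm_prod]
    exact Finset.prod_le_one (fun _ _ => norm_nonneg _) fun _ _ => hf _
  refine (norm_sum_le _ _).trans ((Finset.sum_le_sum h1).trans ?_)
  rw [Finset.sum_const, Finset.card_univ, nsmul_eq_mul, Fintype.card_fun, Fintype.card_fin, pow_succ]
  push_cast
  exact le_rfl

lemma gowSum_prod {G G₁ G₂ : Type*} [AddCommGroup G] [Fintype G] [AddCommGroup G₁] [Fintype G₁]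
    [AddCommGroup G₂] [Fintype G₂] (e : G ≃+ G₁ × G₂) (k : ℕ) (f : G → ℂ) (f₁ : G₁ → ℂ) (f₂ : G₂ → ℂ)
    (hf : ∀ x, f x = f₁ (e x).1 * f₂ (e x).2) :
    gowSum k f = gowSum k f₁ * gowSum k f₂ := by
  unfold gowSum
  rw [Finset.sum_mul_sum, ← Fintype.sum_prod_type'
    (f := fun (h₁ : Fin k → G₁) (h₂ : Fin k → G₂) => (∑ n : G₁, ∏ ω : Fin k → Bool, f₁ (n + gowL ω h₁)) *
      ∑ n : G₂, ∏ ω : Fin k → Bool, f₂ (n + gowL ω h₂))]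
  refine Fintype.sum_equiv ((Equiv.arrowCongr (Equiv.refl (Fin k)) e.toEquiv).trans
    (Equiv.arrowProdEquivProdArrow (Fin k) (fun _ => G₁) (fun _ => G₂))) _ _ fun h => ?_
  rw [Finset.sum_mul_sum, ← Fintype.sum_prod_type' (f := fun (n₁ : G₁) (n₂ : G₂) => _ * _)]
  refine Fintype.sum_equiv e.toEquiv _ _ fun n => ?_
  rw [← Finset.prod_mul_distrib]
  refine Finset.prod_congr rfl fun ω _ => ?_
  rw [hf]
  have h1 : e (n + gowL ω h) = e n + gowL ω (fun i => e (h i)) := by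
    rw [map_add]
    congr 1
    unfold gowL
    rw [map_sum]
    refine Finset.sum_congr rfl fun i _ => ?_
    split_ifs <;> simp
  have h2 : (gowL ω (fun i => e (h i))).1 = gowL ω (fun i => (e (h i)).1) := by
    unfold gowL
    rw [Prod.fst_sum]
    refine Finset.sum_congr rfl fun i _ => ?_
    split_ifs <;> simp
  have h3 : (gowL ω (fun i => e (h i))).2 = gowL ω (fun i => (e (h i)).2) := by
    unfold gowL
    rw [Prod.snd_sum]
    refine Finset.sum_congr rfl fun i _ => ?_
    split_ifs <;> simp
  rw [h1, Prod.fst_add, Prod.snd_add, h2, h3]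
  rfl

lemma conductor_le_of_factors {n d : ℕ} (χ : DirichletCharacter ℂ n) (h : χ.FactorsThrough d) :
    χ.conductor ≤ d := Nat.sInf_le h

lemma real_sq {n : ℕ} (χ : DirichletCharacter ℂ n) (hr : ∀ x : ZMod n, (starRingEnd ℂ) (χ x) = χ x)
    (u : (ZMod n)ˣ) : χ u * χ u = 1 := by
  have h1 := χ.unit_norm_eq_one u
  have h2 := Complex.mul_conj (χ u)
  rw [hr, Complex.normSq_eq_norm_sq, h1] at h2
  simpa using h2

lemma factors_of_sq {n d : ℕ} [NeZero n] (hd : d ∣ n) (χ : DirichletCharacter ℂ n)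
    (hr : ∀ x : ZMod n, (starRingEnd ℂ) (χ x) = χ x)
    (h : ∀ u : (ZMod n)ˣ, ZMod.unitsMap hd u = 1 → ∃ s : ZMod n, s * s = u) : χ.FactorsThrough d := by
  rw [DirichletCharacter.factorsThrough_iff_ker_unitsMap hd]
  intro u hu
  obtain ⟨s, hs⟩ := h u hu
  have hsu : IsUnit s := isUnit_of_mul_isUnit_left (hs ▸ u.isUnit)
  obtain ⟨s, rfl⟩ := hsu
  rw [MonoidHom.mem_ker]
  ext
  rw [MulChar.coe_toUnitHom, ← hs, map_mul, real_sq χ hr]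
  simp

/-- one component of a character -/
noncomputable def compChar {n a b : ℕ} (e : ZMod n ≃+* ZMod a × ZMod b) (χ : DirichletCharacter ℂ n) :
    DirichletCharacter ℂ a where
  toFun x := χ (e.symm (x, 1))
  map_one' := by
    have : ((1, 1) : ZMod a × ZMod b) = 1 := rfl
    rw [this, map_one, map_one]
  map_mul' x y := by
    rw [← map_mul, ← map_mul]
    simp
  map_nonunit' x hx := by
    apply χ.map_nonunit
    intro h
    apply hx
    have := h.map e
    rw [e.apply_symm_apply] at this
    exact (Prod.isUnit_iff.mp this).1

lemma compChar_apply {n a b : ℕ} (e : ZMod n ≃+* ZMod a × ZMod b) (χ : DirichletCharacter ℂ n) (x) :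
    compChar e χ x = χ (e.symm (x, 1)) := rfl

lemma compChar_primitive {n a b : ℕ} [NeZero n] [NeZero a] [NeZero b] (hn : n = a * b)
    (e : ZMod n ≃+* ZMod a × ZMod b) (χ : DirichletCharacter ℂ n) (hχ : χ.IsPrimitive) :
    (compChar e χ).IsPrimitive := by
  set d := (compChar e χ).conductor with hd
  have hda : d ∣ a := (compChar e χ).conductor_dvd_level
  have hfac : (compChar e χ).FactorsThrough d := (compChar e χ).factorsThrough_conductor
  rw [DirichletCharacter.factorsThrough_iff_ker_unitsMap hda] at hfac
  have hdb : d * b ∣ n := hn ▸ Nat.mul_dvd_mul_right hda b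
  have hbn : b ∣ n := ⟨a, by rw [hn, mul_comm]⟩
  have han : a ∣ n := ⟨b, hn⟩
  have key : χ.FactorsThrough (d * b) := by
    rw [DirichletCharacter.factorsThrough_iff_ker_unitsMap hdb]
    intro u hu
    rw [MonoidHom.mem_ker] at hu ⊢
    have hu' : ZMod.castHom hdb (ZMod (d * b)) (u : ZMod n) = 1 := by
      have := congrArg Units.val hu
      simpa [ZMod.unitsMap_def] using this
    have h2 : (e u).2 = 1 := by
      have h3 : (RingHom.snd (ZMod a) (ZMod b)).comp (e : ZMod n →+* ZMod a × ZMod b) =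
        (ZMod.castHom (Dvd.intro_left d rfl) (ZMod b)).comp (ZMod.castHom hdb (ZMod (d * b))) :=
        RingHom.ext_zmod _ _
      have h4 := congrArg (fun φ => φ (u : ZMod n)) h3
      simp only [RingHom.comp_apply] at h4
      rw [hu', map_one] at h4
      exact h4
    have h1 : ZMod.castHom hda (ZMod d) (e u).1 = 1 := by
      have h3 : (ZMod.castHom hda (ZMod d)).comp ((RingHom.fst (ZMod a) (ZMod b)).comp (e : ZMod n →+* ZMod a × ZMod b)) =
        (ZMod.castHom (Dvd.intro b rfl) (ZMod d)).comp (ZMod.castHom hdb (ZMod (d * b))) :=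
        RingHom.ext_zmod _ _
      have h4 := congrArg (fun φ => φ (u : ZMod n)) h3
      simp only [RingHom.comp_apply] at h4
      rw [hu', map_one] at h4
      exact h4
    have hunit : IsUnit (e u).1 := (Prod.isUnit_iff.mp (u.isUnit.map e)).1
    obtain ⟨v, hv⟩ := hunit
    have hvk : v ∈ (ZMod.unitsMap hda).ker := by
      rw [MonoidHom.mem_ker]
      ext
      rw [ZMod.unitsMap_def]
      simp only [Units.coe_map, Units.val_one]
      rw [← hv] at h1
      exact h1
    have h5 := hfac hvk
    rw [MonoidHom.mem_ker] at h5
    have h6 := congrArg Units.val h5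
    rw [MulChar.coe_toUnitHom, compChar_apply, hv] at h6
    have h7 : e.symm ((e u).1, 1) = u := by
      rw [← h2, Prod.mk.eta, e.symm_apply_apply]
    rw [h7] at h6
    ext
    rw [MulChar.coe_toUnitHom]
    exact h6
  have h8 := conductor_le_of_factors χ key
  rw [hχ, hn] at h8
  have h9 : a ≤ d := Nat.le_of_mul_le_mul_right h8 (Nat.pos_of_ne_zero (NeZero.ne b))
  exact le_antisymm (Nat.le_of_dvd (Nat.pos_of_ne_zero (NeZero.ne a)) hda) h9

lemma sq_two (a : ℕ) (u : ℤ) (hu : 8 ∣ u - 1) : ∃ s : ℤ, (2 : ℤ) ^ (a + 3) ∣ s * s - u := by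
  induction a with
  | zero => exact ⟨1, by simpa using (dvd_neg.mpr hu)⟩
  | succ a ih =>
    obtain ⟨s, c, hc⟩ := ih
    rcases Int.even_or_odd' c with ⟨c', h | h⟩
    · exact ⟨s, c', by rw [hc, h]; ring⟩
    · have hs : s % 2 = 1 := by
        by_contra hcon
        obtain ⟨w, hw⟩ : ∃ w, s = 2 * w := ⟨s / 2, by omega⟩
        obtain ⟨v, hv⟩ := hu
        have : s * s - u = 2 * (4 * 2 ^ a * c) := by rw [hc]; ring
        rw [hw, show (2 * w) * (2 * w) = 2 * (2 * w * w) by ring] at this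
        omega
      obtain ⟨w, hw⟩ : ∃ w, s = 2 * w + 1 := ⟨s / 2, by omega⟩
      refine ⟨s + 2 ^ (a + 2), c' + w + 1 + 2 ^ a, ?_⟩
      have : (s + 2 ^ (a + 2)) * (s + 2 ^ (a + 2)) - u = (s * s - u) + 2 ^ (a + 3) * s + 2 ^ (a + 2) * 2 ^ (a + 2) := by
        ring
      rw [this, hc, h, hw]
      ring

lemma cast_unit_eq {n d : ℕ} [NeZero n] (hd : d ∣ n) (u : (ZMod n)ˣ) (hu : ZMod.unitsMap hd u = 1) :
    ∃ z : ℤ, ((z : ℤ) : ZMod n) = u ∧ (d : ℤ) ∣ z - 1 := by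
  obtain ⟨z, hz⟩ := ZMod.intCast_surjective (u : ZMod n)
  refine ⟨z, hz, ?_⟩
  have h1 : ZMod.castHom hd (ZMod d) (u : ZMod n) = 1 := by
    have := congrArg Units.val hu
    simpa [ZMod.unitsMap_def] using this
  rw [← hz, map_intCast] at h1
  rw [← ZMod.intCast_zmod_eq_zero_iff_dvd]
  push_cast
  rw [h1, sub_self]

lemma two_pow_level (a : ℕ) (χ : DirichletCharacter ℂ (2 ^ a)) (hχ : χ.IsPrimitive)
    (hr : ∀ x, (starRingEnd ℂ) (χ x) = χ x) : 2 ^ a ≤ 8 := by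
  by_contra hcon
  have ha : 3 ≤ a := by
    by_contra h
    have : 2 ^ a ≤ 2 ^ 3 := Nat.pow_le_pow_right (by norm_num) (by omega)
    omega
  obtain ⟨b, rfl⟩ := Nat.exists_eq_add_of_le' ha
  have hd : 8 ∣ 2 ^ (b + 3) := ⟨2 ^ b, by ring⟩
  have : χ.FactorsThrough 8 := by
    apply factors_of_sq hd χ hr
    intro u hu
    obtain ⟨z, hz, hz1⟩ := cast_unit_eq hd u hu
    obtain ⟨s, hs⟩ := sq_two b z (by exact_mod_cast hz1)
    refine ⟨(s : ZMod (2 ^ (b + 3))), ?_⟩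
    rw [← hz, ← sub_eq_zero]
    have := (ZMod.intCast_zmod_eq_zero_iff_dvd (s * s - z) (2 ^ (b + 3))).mpr (by exact_mod_cast hs)
    exact_mod_cast this
  have h1 := conductor_le_of_factors χ this
  rw [hχ] at h1
  omega

lemma odd_pow_level (p a : ℕ) (hp : p.Prime) (hp2 : p ≠ 2) (ha : 0 < a) (χ : DirichletCharacter ℂ (p ^ a))
    (hχ : χ.IsPrimitive) (hr : ∀ x, (starRingEnd ℂ) (χ x) = χ x) : a = 1 := by
  have hpodd : p % 2 = 1 := hp.eq_two_or_odd.resolve_left hp2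
  have : NeZero p := ⟨hp.ne_zero⟩
  obtain ⟨b, rfl⟩ := Nat.exists_eq_add_of_le' ha
  have hd : p ∣ p ^ (b + 1) := ⟨p ^ b, by ring⟩
  have hf : χ.FactorsThrough p := by
    apply factors_of_sq hd χ hr
    intro u hu
    obtain ⟨z, hz, hz1⟩ := cast_unit_eq hd u hu
    have h1 := dvd_sub_pow_of_dvd_sub hz1 b
    rw [one_pow] at h1
    have h2 := (ZMod.intCast_zmod_eq_zero_iff_dvd (z ^ p ^ b - 1) (p ^ (b + 1))).mpr (by exact_mod_cast h1)
    push_cast at h2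
    rw [hz, sub_eq_zero] at h2
    have hodd : (p ^ b) % 2 = 1 := by
      rw [Nat.pow_mod, hpodd]; simp
    refine ⟨(u : ZMod (p ^ (b + 1))) ^ ((p ^ b + 1) / 2), ?_⟩
    rw [← pow_add, show (p ^ b + 1) / 2 + (p ^ b + 1) / 2 = p ^ b + 1 by omega, pow_succ (u : ZMod (p ^ (b + 1))), h2, one_mul]
  have h1 := conductor_le_of_factors χ hf
  rw [hχ] at h1
  by_contra hne
  have : p ^ 2 ≤ p ^ (b + 1) := Nat.pow_le_pow_right hp.pos (by omega)
  have := hp.two_le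
  nlinarith

lemma real_eq_quad {p : ℕ} [Fact p.Prime] (hp2 : p ≠ 2) (χ : DirichletCharacter ℂ p) (hχ : χ.IsPrimitive)
    (hr : ∀ x, (starRingEnd ℂ) (χ x) = χ x) (x : ZMod p) : χ x = (quadraticChar (ZMod p) x : ℂ) := by
  have hchar : ringChar (ZMod p) ≠ 2 := by rwa [ZMod.ringChar_zmod_n]
  have hne : χ ≠ 1 := by
    rintro rfl
    rw [DirichletCharacter.isPrimitive_def, DirichletCharacter.conductor_one] at hχ
    exact (Fact.out : p.Prime).one_lt.ne hχ
  have hsq : ∀ y : ZMod p, y ≠ 0 → χ (y * y) = 1 := by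
    intro y hy
    rw [map_mul]
    exact real_sq χ hr (Units.mk0 y hy)
  obtain ⟨w, hw⟩ := MulChar.ne_one_iff.mp hne
  have hw1 : χ w = -1 := by
    rcases mul_self_eq_one_iff.mp (real_sq χ hr w) with h | h
    · exact absurd h hw
    · exact h
  have hwq : quadraticChar (ZMod p) (w : ZMod p) = -1 := by
    rw [quadraticChar_neg_one_iff_not_isSquare]
    rintro ⟨y, hy⟩
    apply hw
    rw [hy]
    apply hsq
    rintro rfl
    simp at hy
  by_cases hx : x = 0
  · subst hx
    rw [MulChar.map_zero, MulChar.map_zero]; simp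
  have hpos : ∀ x : ZMod p, x ≠ 0 → quadraticChar (ZMod p) x = 1 → χ x = 1 := by
    intro x hx h
    obtain ⟨y, rfl⟩ := (quadraticChar_one_iff_isSquare hx).mp h
    apply hsq
    rintro rfl
    simp at hx
  rcases quadraticChar_dichotomy hx with h | h
  · rw [h, hpos x hx h]; simp
  · have h1 : quadraticChar (ZMod p) (x * w) = 1 := by rw [map_mul, h, hwq]; norm_num
    have h2 := hpos _ (mul_ne_zero hx w.ne_zero) h1
    rw [map_mul, hw1] at h2
    rw [h]
    push_cast
    linear_combination -h2

/-- the statement proved by induction on the level -/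
def GowBound (k : ℕ) (q : ℕ) : Prop :=
  ∀ [NeZero q] (χ : DirichletCharacter ℂ q), χ.IsPrimitive → (∀ x, (starRingEnd ℂ) (χ x) = χ x) →
    √(q : ℝ) * ‖gowSum k (fun x : ZMod q => χ x)‖ ≤
      (400 + 40 * 2 ^ k) ^ q.primeFactors.card * (q : ℝ) ^ (k + 1)

lemma gowBound_prime (k : ℕ) (hk : 1 ≤ k) (p : ℕ) (hp : p.Prime) (hp2 : p ≠ 2) : GowBound k p := by
  intro _ χ hχ hr
  have : Fact p.Prime := ⟨hp⟩
  have h1 := gow_prime_bound hp2 k hk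
  rw [hp.primeFactors]
  simp only [Finset.card_singleton, pow_one]
  refine le_trans (le_of_eq ?_) h1
  congr 1
  have : gowSum k (fun x : ZMod p => χ x) = (((∑ h : Fin k → ZMod p, ∑ n : ZMod p, ∏ ω : Fin k → Bool,
      quadraticChar (ZMod p) (n + gowL ω h) : ℤ) : ℝ) : ℂ) := by
    unfold gowSum
    push_cast
    refine Finset.sum_congr ?_ fun h _ => Finset.sum_congr ?_ fun n _ => Finset.prod_congr rfl fun ω _ => ?_
    · ext; simp
    · ext; simp
    · exact real_eq_quad hp2 χ hχ hr _
  rw [this, Complex.norm_real, Real.norm_eq_abs]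

lemma gowBound_all (k : ℕ) (hk : 1 ≤ k) (q : ℕ) : GowBound k q := by
  have hK : (1 : ℝ) ≤ 400 + 40 * 2 ^ k := by
    have : (0 : ℝ) < 2 ^ k := by positivity
    linarith
  induction q using Nat.recOnPosPrimePosCoprime with
  | zero => intro h; exact absurd rfl (NeZero.ne 0)
  | one =>
    intro _ χ _ _
    have := gowSum_triv k (fun x : ZMod 1 => χ x) (fun x => χ.norm_le_one x)
    rw [ZMod.card] at this
    simpa using this
  | prime_pow p n hp hn =>
    intro _ χ hχ hr
    by_cases hp2 : p = 2
    · subst hp2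
      have h8 := two_pow_level n χ hχ hr
      have := gowSum_triv k (fun x : ZMod (2 ^ n) => χ x) (fun x => χ.norm_le_one x)
      rw [ZMod.card] at this
      rw [Nat.primeFactors_prime_pow hn.ne' hp]
      simp only [Finset.card_singleton, pow_one]
      have h3 : √((2 ^ n : ℕ) : ℝ) ≤ 400 + 40 * 2 ^ k := by
        rw [Real.sqrt_le_left (by linarith)]
        have : ((2 ^ n : ℕ) : ℝ) ≤ 8 := by exact_mod_cast h8
        have h4 : (0 : ℝ) < 2 ^ k := by positivity
        nlinarith
      gcongr
    · have h1 := odd_pow_level p n hp hp2 hn χ hχ hr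
      have hb : GowBound k (p ^ n) := by
        rw [h1, pow_one]; exact gowBound_prime k hk p hp hp2
      exact hb χ hχ hr
  | coprime a b ha hb hab iha ihb =>
    have : NeZero a := ⟨by omega⟩
    have : NeZero b := ⟨by omega⟩
    intro _ χ hχ hr
    let e := ZMod.chineseRemainder hab
    let e' : ZMod (a * b) ≃+* ZMod b × ZMod a := e.trans RingEquiv.prodComm
    have h1 := iha (compChar e χ) (compChar_primitive rfl e χ hχ) (fun x => hr _)
    have h2 := ihb (compChar e' χ) (compChar_primitive (mul_comm a b) e' χ hχ) (fun x => hr _)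
    have h3 : gowSum k (fun x : ZMod (a * b) => χ x) =
        gowSum k (fun x : ZMod a => compChar e χ x) * gowSum k (fun x : ZMod b => compChar e' χ x) := by
      apply gowSum_prod e.toAddEquiv
      intro x
      rw [compChar_apply, compChar_apply, ← map_mul]
      congr 1
      apply e.injective
      have : e'.symm ((e.toAddEquiv x).2, 1) = e.symm (1, (e.toAddEquiv x).2) := rfl
      rw [this, map_mul, e.apply_symm_apply, e.apply_symm_apply]
      simp only [Prod.mk_mul_mk, mul_one, one_mul]
      rfl
    rw [h3, norm_mul, hab.primeFactors_mul, Finset.card_union_of_disjoint hab.disjoint_primeFactors]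
    push_cast
    rw [Real.sqrt_mul (by positivity), pow_add, mul_pow]
    calc _ = (√(a : ℝ) * ‖gowSum k (fun x : ZMod a => compChar e χ x)‖) *
          (√(b : ℝ) * ‖gowSum k (fun x : ZMod b => compChar e' χ x)‖) := by ring
      _ ≤ _ := mul_le_mul h1 h2 (by positivity) (by positivity)
      _ = _ := by ring

lemma omega_bound (K : ℝ) (hK : 1 ≤ K) (η : ℝ) (hη : 0 < η) :
    ∃ C : ℝ, 0 < C ∧ ∀ q : ℕ, 1 ≤ q → K ^ q.primeFactors.card ≤ C * (q : ℝ) ^ η := by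
  obtain ⟨N, hN⟩ := exists_nat_ge (K ^ (1 / η))
  refine ⟨K ^ N, by positivity, fun q hq => ?_⟩
  have hpt : ∀ p ∈ q.primeFactors, K ≤ (if p < N then K else 1) * (p : ℝ) ^ η := by
    intro p hp
    have hp1 : (1 : ℝ) ≤ p := by exact_mod_cast (Nat.prime_of_mem_primeFactors hp).one_lt.le
    split_ifs with h
    · exact le_mul_of_one_le_right (by linarith) (Real.one_le_rpow hp1 hη.le)
    · rw [one_mul]
      have : K ^ (1 / η) ≤ p := hN.trans (by exact_mod_cast not_lt.mp h)
      calc K = (K ^ (1 / η)) ^ η := by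
            rw [← Real.rpow_mul (by linarith), one_div_mul_cancel hη.ne', Real.rpow_one]
        _ ≤ _ := Real.rpow_le_rpow (by positivity) this hη.le
  calc K ^ q.primeFactors.card = ∏ p ∈ q.primeFactors, K := by rw [Finset.prod_const]
    _ ≤ ∏ p ∈ q.primeFactors, ((if p < N then K else 1) * (p : ℝ) ^ η) :=
        Finset.prod_le_prod (fun _ _ => by linarith) hpt
    _ = (∏ p ∈ q.primeFactors, (if p < N then K else 1)) * ∏ p ∈ q.primeFactors, (p : ℝ) ^ η :=
        Finset.prod_mul_distrib
    _ ≤ K ^ N * (q : ℝ) ^ η := by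
        gcongr
        · rw [Finset.prod_ite, Finset.prod_const, Finset.prod_const_one, mul_one]
          apply pow_le_pow_right₀ hK
          have : q.primeFactors.filter (fun p => p < N) ⊆ Finset.range N := by
            intro p hp
            simpa using (Finset.mem_filter.mp hp).2
          simpa using Finset.card_le_card this
        · rw [Real.finsetProd_rpow _ _ (fun _ _ => by positivity)]
          apply Real.rpow_le_rpow (by positivity) _ hη.le
          have := Nat.le_of_dvd hq (Nat.prod_primeFactors_dvd q)
          rw [← Nat.cast_prod]
          exact_mod_cast this

end Assembly

theorem quadratic_character_gowers_cancellation (k : ℕ) (hk : 1 ≤ k) (ε : ℝ) (hε : 0 < ε) :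
    ∃ C : ℝ, 0 < C ∧ ∀ q : ℕ, 1 ≤ q → ∀ χ : DirichletCharacter ℂ q,
      χ.IsPrimitive → (∀ n : ZMod q, (starRingEnd ℂ) (χ n) = χ n) →
      gowersUAvg k (fun x : ZMod q => χ x) ≤ C * (q : ℝ) ^ (-(1 : ℝ) / 2 ^ (k + 1) + ε) := by
  have hK : (1 : ℝ) ≤ 400 + 40 * 2 ^ k := by
    have : (0 : ℝ) < 2 ^ k := by positivity
    linarith
  obtain ⟨C, hC, hCb⟩ := omega_bound (400 + 40 * 2 ^ k) hK (ε * 2 ^ k) (by positivity)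
  refine ⟨C ^ ((1 : ℝ) / 2 ^ k), by positivity, fun q hq χ hχ hr => ?_⟩
  have : NeZero q := ⟨by omega⟩
  have hq0 : (0 : ℝ) < q := by exact_mod_cast hq
  have h1 := gowBound_all k hk q χ hχ hr
  have h2 := hCb q hq
  unfold gowersUAvg
  rw [tsum_eq_gowSum k _ hr, Nat.card_zmod]
  set S := gowSum k (fun x : ZMod q => χ x) with hS
  have h3 : |S.re / (q : ℝ) ^ (k + 1)| ≤ C * (q : ℝ) ^ (ε * 2 ^ k - 1 / 2) := by
    rw [abs_div, abs_of_pos (pow_pos hq0 (k + 1)), div_le_iff₀ (by positivity), Real.rpow_sub hq0,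
      ← Real.sqrt_eq_rpow]
    have hs : 0 < √(q : ℝ) := Real.sqrt_pos.mpr hq0
    have h4 : √(q : ℝ) * |S.re| ≤ C * (q : ℝ) ^ (ε * 2 ^ k) * (q : ℝ) ^ (k + 1) :=
      (mul_le_mul_of_nonneg_left (Complex.abs_re_le_norm S) hs.le).trans
        (h1.trans (mul_le_mul_of_nonneg_right h2 (by positivity)))
    rw [mul_div_assoc', div_mul_eq_mul_div, le_div_iff₀ hs]
    linarith
  calc (S.re / (q : ℝ) ^ (k + 1)) ^ ((1 : ℝ) / 2 ^ k)
      ≤ |S.re / (q : ℝ) ^ (k + 1)| ^ ((1 : ℝ) / 2 ^ k) :=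
        (le_abs_self _).trans (Real.abs_rpow_le_abs_rpow _ _)
    _ ≤ (C * (q : ℝ) ^ (ε * 2 ^ k - 1 / 2)) ^ ((1 : ℝ) / 2 ^ k) :=
        Real.rpow_le_rpow (abs_nonneg _) h3 (by positivity)
    _ = C ^ ((1 : ℝ) / 2 ^ k) * (q : ℝ) ^ (-(1 : ℝ) / 2 ^ (k + 1) + ε) := by
        rw [Real.mul_rpow hC.le (by positivity), ← Real.rpow_mul hq0.le]
        congr 2
        rw [pow_succ]
        field_simp
        ring
end
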